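/- For all integers n ≥ 2 and d ≥ 1 there exists N₀, depending only on n and d, with the following property. Let p be a prime, k ≥ 1, K = GaloisField p k, q = p^k with q ≥ N₀, and let f ∈ MvPolynomial (Fin n) K have total degree between 1 and d and be such that the image of f in MvPolynomial (Fin n) (AlgebraicClosure K) under the algebra map is irreducible. Then there exists x ∈ K^n with f(x) = 0. -/

import Mathlib

/-!
After a linear change of variables, `f` is a polynomial in `x` and `Y` that is monic of degree `e`
in `Y` and has `∂f/∂Y ≠ 0`. Let `V` be the hypersurface `f = 0` over an algebraically closed
field; since `f` is absolutely irreducible, `V × V` is irreducible. Let `J` be the ideal of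
functions on `V` generated by the `x i ^ q - x i`, and let `g = f(x, Y') / (Y' - Y)`, a function on
pairs `((x, Y), (x + h, Y'))` of points of `V`. If `V` has no point over the field with `q`
elements, then `Y ^ q - Y` is a unit modulo `J`, and hence the restriction of `g` to the graph of
the Frobenius, where `h i = x i ^ q - x i`, lies in `J`.

As in Stepanov's method, linear algebra provides a nonzero function `P` on `V × V`, of bounded
degree in `x`, `Y` and `Y'` and of degree at most `k` in `h`, which is congruent to a multiple of
`g ^ (k + e)` modulo the `(k + e)`-th power of the ideal of the `h i`. This uses that `g` does not
vanish identically on the diagonal, where it is `∂f/∂Y`, and that for large `k` the conditions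
that eliminate the degrees from `k` to `k + e - 1` in `h` are few compared to the free
coefficients. For large `q` the restriction of `P` to the graph of the Frobenius is nonzero. It has
degree at most `k * q + (e - 1) * q + O(1)`, but it lies in `J ^ (k + e)`, whose nonzero elements
have degree at least `(k + e) * q - O(1)`: a contradiction for large `q`.
-/

open MvPolynomial Module
open scoped MonomialOrder

namespace Stepanov

section MonomialOrder

variable {σ R : Type*} [CommRing R] {m : MonomialOrder σ}

lemma exists_coeff_degree_sum_ne_zero {ι : Type*} {s : Finset ι} (hs : s.Nonempty)
    {w : ι → MvPolynomial σ R} (hw : ∀ i ∈ s, w i ≠ 0)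
    (hinj : Set.InjOn (fun i => m.degree (w i)) s) :
    ∃ i ∈ s, (∑ j ∈ s, w j).coeff (m.degree (w i)) ≠ 0 := by
  obtain ⟨i, hi, hmax⟩ := s.exists_max_image (fun i => m.toSyn (m.degree (w i))) hs
  refine ⟨i, hi, ?_⟩
  rw [coeff_sum, Finset.sum_eq_single_of_mem i hi fun j hj hji => m.coeff_eq_zero_of_lt
    ((hmax j hj).lt_of_ne (m.toSyn.injective.ne (hinj.ne hj hi hji)))]
  exact m.coeff_degree_ne_zero_iff.2 (hw i hi)

lemma span_range_eq_top_of_monic {v : (σ →₀ ℕ) → MvPolynomial σ R}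
    (hv : ∀ δ, m.Monic (v δ)) (hdeg : ∀ δ, m.degree (v δ) = δ) :
    Submodule.span R (Set.range v) = ⊤ := by
  have hsub (p : MvPolynomial σ R) : m.leadingCoeff p • v (m.degree p) ∈
      Submodule.span R (Set.range v) :=
    Submodule.smul_mem _ _ (Submodule.subset_span ⟨_, rfl⟩)
  suffices h : ∀ (a : m.syn) (p : MvPolynomial σ R), m.toSyn (m.degree p) = a →
      p ∈ Submodule.span R (Set.range v) from Submodule.eq_top_iff'.2 fun p => h _ p rfl
  intro a
  induction a using WellFoundedLT.induction with
  | ind a ih =>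
    rintro p rfl
    rw [← sub_add_cancel p (m.leadingCoeff p • v (m.degree p))]
    refine add_mem ?_ (hsub p)
    set r := p - m.leadingCoeff p • v (m.degree p) with hr
    have hcoeff : r.coeff (m.degree p) = 0 := by
      have h1 := (hv (m.degree p)).coeff_degree
      rw [hdeg] at h1
      simp [hr, h1, MonomialOrder.leadingCoeff]
    have hle : m.degree r ≼[m] m.degree p := by
      refine m.degree_sub_le.trans (sup_le le_rfl (m.degree_smul_le.trans ?_))
      rw [hdeg]
    rcases hle.lt_or_eq with hlt | heq
    · exact ih _ hlt r rfl
    · rw [← m.toSyn.injective heq, m.coeff_degree_eq_zero_iff] at hcoeff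
      rw [hcoeff]
      exact zero_mem _

lemma exists_monomialOrder.{u} (σ : Type u) [Finite σ] : Nonempty (MonomialOrder.{u, u} σ) := by
  classical
  let _ : LinearOrder σ := linearOrderOfSTO WellOrderingRel
  exact ⟨MonomialOrder.lex⟩

end MonomialOrder

section FrobeniusDiff

variable {σ R : Type*} [CommRing R] {q : ℕ}

variable (R) in
/-- The polynomial `X i ^ q - X i`, which vanishes at all points over a field with `q` elements. -/
noncomputable def frobeniusDiff (q : ℕ) (i : σ) : MvPolynomial σ R := X i ^ q - X i

variable (σ R) in
/-- The ideal generated by the polynomials `X i ^ q - X i`. -/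
noncomputable def frobeniusIdeal (q : ℕ) : Ideal (MvPolynomial σ R) :=
  Ideal.span (Set.range (frobeniusDiff R q))

lemma frobeniusIdeal_pow_eq_span [Fintype σ] (q k : ℕ) : frobeniusIdeal σ R q ^ k =
    Ideal.span ((fun β => ∏ i, frobeniusDiff R q i ^ β i) '' {β : σ →₀ ℕ | β.degree = k}) := by
  rw [frobeniusIdeal, Ideal.span, Submodule.span_pow, ← Set.image_univ,
    Finsupp.image_pow_eq_finsuppProd_image]
  congr 1
  ext p
  simp [Finsupp.prod_fintype, Finsupp.degree_apply]

lemma monic_degree_frobeniusDiff [Nontrivial R] (m : MonomialOrder σ) (hq : 1 < q) (i : σ) :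
    m.Monic (frobeniusDiff R q i) ∧ m.degree (frobeniusDiff R q i) = Finsupp.single i q := by
  have hpow : m.degree (X i ^ q : MvPolynomial σ R) = Finsupp.single i q := by
    classical
    rw [X_pow_eq_monomial, m.degree_monomial, if_neg one_ne_zero]
  have hlt : m.degree (X i : MvPolynomial σ R) ≺[m] m.degree (X i ^ q : MvPolynomial σ R) := by
    rw [hpow, m.degree_X]
    refine m.toSyn_strictMono (lt_of_le_of_ne ?_ ?_)
    · exact Finsupp.single_mono hq.le
    · exact (Finsupp.single_injective i).ne hq.ne
  exact ⟨(m.leadingCoeff_sub_of_lt hlt).trans m.monic_X.pow, (m.degree_sub_of_lt hlt).trans hpow⟩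

section Fintype

variable [Fintype σ]

variable (R) in
/-- The basis of `R[X]` adapted to the powers of the ideal generated by the `X i ^ q - X i`: the
leading monomial of `adaptedBasis R q δ` is `X ^ δ`, and the largest possible power of
`X i ^ q - X i` is split off in each variable. -/
noncomputable def adaptedBasis (q : ℕ) (δ : σ →₀ ℕ) : MvPolynomial σ R :=
  monomial (δ.mapRange (· % q) (Nat.zero_mod q)) 1 * ∏ i, frobeniusDiff R q i ^ (δ i / q)

lemma adaptedBasis_add_nsmul (hq : 0 < q) (δ β : σ →₀ ℕ) :
    adaptedBasis R q (δ + q • β) = adaptedBasis R q δ * ∏ i, frobeniusDiff R q i ^ β i := by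
  have hmod : (δ + q • β).mapRange (· % q) (Nat.zero_mod q) =
      δ.mapRange (· % q) (Nat.zero_mod q) := by
    ext i
    simp
  simp only [adaptedBasis, hmod, Finsupp.add_apply, Finsupp.smul_apply, smul_eq_mul,
    Nat.add_mul_div_left _ _ hq, pow_add, Finset.prod_mul_distrib, mul_assoc]

variable [IsDomain R]

lemma monic_degree_prod_frobeniusDiff_pow (m : MonomialOrder σ) (hq : 1 < q) (β : σ →₀ ℕ) :
    m.Monic (∏ i, frobeniusDiff R q i ^ β i) ∧
      m.degree (∏ i, frobeniusDiff R q i ^ β i) = q • β := by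
  have hz := monic_degree_frobeniusDiff (R := R) m hq
  have hpow (i : σ) : m.Monic (frobeniusDiff R q i ^ β i) := (hz i).1.pow
  refine ⟨MonomialOrder.Monic.prod fun i _ => hpow i, ?_⟩
  rw [m.degree_prod fun i _ => (hpow i).ne_zero]
  simp_rw [m.degree_pow, (hz _).2, Finsupp.smul_single, smul_eq_mul, mul_comm _ q]
  exact Finsupp.univ_sum_single (q • β)

lemma monic_degree_adaptedBasis (m : MonomialOrder σ) (hq : 1 < q) (δ : σ →₀ ℕ) :
    m.Monic (adaptedBasis R q δ) ∧ m.degree (adaptedBasis R q δ) = δ := by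
  obtain ⟨hmon, hdeg⟩ := monic_degree_prod_frobeniusDiff_pow (R := R) m hq
    (δ.mapRange (· / q) (Nat.zero_div q))
  refine ⟨m.monic_monomial_one.mul hmon, ?_⟩
  classical
  refine (m.degree_mul (monomial_eq_zero.not.2 one_ne_zero) hmon.ne_zero).trans ?_
  rw [hdeg, m.degree_monomial, if_neg one_ne_zero]
  ext i
  simp [Nat.mod_add_div]

lemma frobeniusIdeal_pow_restrictScalars_le (hq : 1 < q) (k : ℕ) :
    (frobeniusIdeal σ R q ^ k).restrictScalars R ≤
      Submodule.span R (adaptedBasis R q '' {δ | k * q ≤ δ.degree}) := by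
  obtain ⟨m⟩ := exists_monomialOrder σ
  have htop := span_range_eq_top_of_monic
    (fun δ => (monic_degree_adaptedBasis (R := R) m hq δ).1)
    (fun δ => (monic_degree_adaptedBasis m hq δ).2)
  rw [frobeniusIdeal_pow_eq_span, Ideal.span, ← Submodule.span_smul_of_span_eq_top htop,
    Submodule.span_le]
  rintro _ ⟨_, ⟨δ, rfl⟩, _, ⟨β, hβ, rfl⟩, rfl⟩
  refine Submodule.subset_span ⟨δ + q • β, ?_, adaptedBasis_add_nsmul (by omega) δ β⟩
  simp [Set.mem_ofPred_eq.mp hβ, mul_comm k]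

end Fintype

variable [Finite σ] [IsDomain R]

lemma mul_le_totalDegree_of_mem_frobeniusIdeal_pow (hq : 1 < q) {k : ℕ} {p : MvPolynomial σ R}
    (hp : p ∈ frobeniusIdeal σ R q ^ k) (hp0 : p ≠ 0) : k * q ≤ p.totalDegree := by
  have := Fintype.ofFinite σ
  obtain ⟨m⟩ := exists_monomialOrder σ
  obtain ⟨l, hl, rfl⟩ := (Finsupp.mem_span_image_iff_linearCombination R).1
    (frobeniusIdeal_pow_restrictScalars_le hq k hp)
  have hl0 : l.support.Nonempty := by
    rw [Finsupp.support_nonempty_iff]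
    rintro rfl
    simp at hp0
  have hbasis := monic_degree_adaptedBasis (R := R) m hq
  have hdeg (δ) (hδ : δ ∈ l.support) : m.degree (l δ • adaptedBasis R q δ) = δ := by
    rw [m.degree_smul_of_isRegular (IsRegular.of_ne_zero (Finsupp.mem_support_iff.1 hδ)),
      (hbasis δ).2]
  obtain ⟨δ, hδ, hcoeff⟩ := exists_coeff_degree_sum_ne_zero (m := m) hl0
    (w := fun δ => l δ • adaptedBasis R q δ)
    (fun δ hδ => smul_ne_zero (Finsupp.mem_support_iff.1 hδ) (hbasis δ).1.ne_zero)
    (fun δ hδ ε hε h => by simpa [hdeg δ hδ, hdeg ε hε] using h)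
  rw [hdeg δ hδ] at hcoeff
  exact ((Finsupp.mem_supported _ _).1 hl hδ).trans (le_totalDegree (mem_support_iff.2 hcoeff))

lemma aeval_frobeniusDiff_ne_zero (hq : 1 < q) {p : MvPolynomial σ (MvPolynomial σ R)}
    (hdeg : ∀ β, (p.coeff β).totalDegree < q) (hp : p ≠ 0) : aeval (frobeniusDiff R q) p ≠ 0 := by
  have := Fintype.ofFinite σ
  obtain ⟨m⟩ := exists_monomialOrder σ
  have hz := monic_degree_prod_frobeniusDiff_pow (R := R) m hq
  have hlt (β : σ →₀ ℕ) (i : σ) : m.degree (p.coeff β) i < q := by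
    by_cases h : p.coeff β = 0
    · simp [h]; omega
    · exact ((Finsupp.le_degree i _).trans (le_totalDegree (m.degree_mem_support h))).trans_lt
        (hdeg β)
  have hdeg' (β) (hβ : β ∈ p.support) :
      m.degree (p.coeff β * ∏ i, frobeniusDiff R q i ^ β i) = m.degree (p.coeff β) + q • β := by
    rw [m.degree_mul (mem_support_iff.1 hβ) (hz β).1.ne_zero, (hz β).2]
  have hinj : Set.InjOn (fun β => m.degree (p.coeff β * ∏ i, frobeniusDiff R q i ^ β i))
      p.support := by
    intro β hβ β' hβ' h
    simp only [hdeg' β hβ, hdeg' β' hβ'] at h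
    ext i
    have hi := congrArg (· / q) (DFunLike.congr_fun h i)
    simpa [Nat.add_mul_div_left _ _ (zero_lt_one.trans hq), Nat.div_eq_of_lt (hlt _ i)] using hi
  obtain ⟨β, -, hβ⟩ := exists_coeff_degree_sum_ne_zero (support_nonempty.2 hp)
    (fun β hβ => mul_ne_zero (mem_support_iff.1 hβ) (hz β).1.ne_zero) hinj
  intro h
  rw [aeval_def, eval₂_eq'] at h
  exact hβ (by rw [← coeff_zero (R := R), ← h]; rfl)

end FrobeniusDiff

section Filtration

lemma powerBasisAux'_apply {R : Type*} [CommRing R] {f : Polynomial R} (hf : f.Monic)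
    (j : Fin f.natDegree) : AdjoinRoot.powerBasisAux' hf j = AdjoinRoot.root f ^ (j : ℕ) :=
  (AdjoinRoot.powerBasis' hf).basis_eq_pow j

variable {k : Type*} [CommRing k]

instance gradedMonoid_restrictTotalDegree (σ : Type*) :
    SetLike.GradedMonoid (restrictTotalDegree σ k) where
  one_mem := (mem_restrictTotalDegree _ _ _).2 (by simp)
  mul_mem _ _ p q hp hq := (mem_restrictTotalDegree _ _ _).2 <| (totalDegree_mul p q).trans <|
    add_le_add ((mem_restrictTotalDegree _ _ _).1 hp) ((mem_restrictTotalDegree _ _ _).1 hq)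

lemma monotone_restrictTotalDegree (σ : Type*) : Monotone (restrictTotalDegree σ k) :=
  fun _ _ hab p hp => (mem_restrictTotalDegree _ _ p).2 <|
    ((mem_restrictTotalDegree _ _ p).1 hp).trans hab

variable {R : Type*} [CommRing R] [Algebra k R] {G : ℕ → Submodule k R}

/-- The filtration of `R[X]` induced by a filtration `G` of `R` for which the variables have
level `0`. -/
def coeffFiltration (σ : Type*) (G : ℕ → Submodule k R) (a : ℕ) :
    Submodule k (MvPolynomial σ R) where
  carrier := {p | ∀ α, p.coeff α ∈ G a}
  add_mem' hp hq α := by simpa using add_mem (hp α) (hq α)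
  zero_mem' _ := by simp
  smul_mem' c p hp α := by simpa using (G a).smul_mem c (hp α)

/-- The filtration of `R[Y]/(f)` induced by a filtration `G` of `R` for which `Y` has level `1`. -/
noncomputable def adjoinRootFiltration (G : ℕ → Submodule k R) (f : Polynomial R) (a : ℕ) :
    Submodule k (AdjoinRoot f) :=
  Submodule.span k {s | ∃ b i, b + i ≤ a ∧ ∃ r ∈ G b, s = AdjoinRoot.of f r * AdjoinRoot.root f ^ i}

lemma monotone_coeffFiltration (σ : Type*) (hG : Monotone G) : Monotone (coeffFiltration σ G) :=
  fun _ _ hab _ hp α => hG hab (hp α)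

lemma monotone_adjoinRootFiltration (f : Polynomial R) : Monotone (adjoinRootFiltration G f) :=
  fun _ _ hab => Submodule.span_mono fun _ ⟨b, i, hbi, h⟩ => ⟨b, i, hbi.trans hab, h⟩

lemma of_mul_root_pow_mem_adjoinRootFiltration (f : Polynomial R) {a : ℕ} {r : R} (hr : r ∈ G a)
    (i : ℕ) : AdjoinRoot.of f r * AdjoinRoot.root f ^ i ∈ adjoinRootFiltration G f (a + i) :=
  Submodule.subset_span ⟨a, i, le_rfl, r, hr, rfl⟩

lemma C_mem_coeffFiltration {σ : Type*} {a : ℕ} {r : R} (hr : r ∈ G a) :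
    C r ∈ coeffFiltration σ G a := by
  classical
  intro γ
  rw [coeff_C]
  split_ifs
  exacts [hr, zero_mem _]

variable [SetLike.GradedMonoid G]

lemma X_mem_coeffFiltration {σ : Type*} (i : σ) : X i ∈ coeffFiltration σ G 0 := by
  classical
  intro γ
  rw [coeff_X]
  split_ifs
  exacts [SetLike.one_mem_graded G, zero_mem _]

instance gradedMonoid_coeffFiltration (σ : Type*) : SetLike.GradedMonoid (coeffFiltration σ G) where
  one_mem α := by
    classical
    rw [coeff_one]
    split_ifs
    exacts [SetLike.one_mem_graded G, zero_mem _]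
  mul_mem _ _ p q hp hq α := by
    classical
    rw [coeff_mul]
    exact sum_mem fun x _ => SetLike.mul_mem_graded (hp x.1) (hq x.2)

lemma root_pow_mem_adjoinRootFiltration (f : Polynomial R) (i : ℕ) :
    AdjoinRoot.root f ^ i ∈ adjoinRootFiltration G f i := by
  simpa using of_mul_root_pow_mem_adjoinRootFiltration f (SetLike.one_mem_graded G) i

instance gradedMonoid_adjoinRootFiltration (f : Polynomial R) :
    SetLike.GradedMonoid (adjoinRootFiltration G f) where
  one_mem := by simpa using root_pow_mem_adjoinRootFiltration f 0
  mul_mem a b s t hs ht := by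
    have hle : adjoinRootFiltration G f a * adjoinRootFiltration G f b ≤
        adjoinRootFiltration G f (a + b) := by
      rw [adjoinRootFiltration, adjoinRootFiltration, Submodule.span_mul_span, Submodule.span_le]
      rintro _ ⟨_, ⟨c, i, hci, r, hr, rfl⟩, _, ⟨d, j, hdj, t, ht, rfl⟩, rfl⟩
      refine Submodule.subset_span ⟨c + d, i + j, by omega, _, SetLike.mul_mem_graded hr ht, ?_⟩
      simp only [map_mul, pow_add]
      ring
    exact hle (Submodule.mul_mem_mul hs ht)

lemma eval₂_mem_of_totalDegree_le (hG : Monotone G) {σ R₀ : Type*} [CommSemiring R₀]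
    {φ : R₀ →+* R} {x : σ → R} {p : MvPolynomial σ R₀} {a b n : ℕ} (hφ : ∀ γ, φ (p.coeff γ) ∈ G a)
    (hx : ∀ i, x i ∈ G b) (hp : p.totalDegree ≤ n) : eval₂ φ x p ∈ G (a + n * b) := by
  rw [eval₂_eq]
  refine sum_mem fun γ hγ => hG (Nat.add_le_add_left (Nat.mul_le_mul_right b <|
    (le_totalDegree hγ).trans hp) a) (SetLike.mul_mem_graded (hφ γ) ?_)
  simpa [Finsupp.sum, Finset.sum_mul] using
    SetLike.prod_pow_mem_graded G (fun _ => b) x γ (F := γ.support) fun i _ => hx i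

lemma aeval_mem_of_totalDegree_le (hG : Monotone G) {σ : Type*} {x : σ → R} (hx : ∀ i, x i ∈ G 1)
    {p : MvPolynomial σ k} {n : ℕ} (hp : p.totalDegree ≤ n) : aeval x p ∈ G n := by
  have hk (c : k) : algebraMap k R c ∈ G 0 := by
    simpa [Algebra.algebraMap_eq_smul_one] using (G 0).smul_mem c (SetLike.one_mem_graded G)
  simpa [aeval_def] using
    eval₂_mem_of_totalDegree_le (φ := algebraMap k R) hG (fun γ => hk (p.coeff γ)) hx hp

lemma det_mem_of_entries_mem {ι : Type*} [Fintype ι] [DecidableEq ι] {M : Matrix ι ι R} {a : ℕ}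
    (hM : ∀ i j, M i j ∈ G a) : M.det ∈ G (Fintype.card ι * a) := by
  rw [Matrix.det_apply]
  refine sum_mem fun π _ => ?_
  have hprod : ∏ i, M (π i) i ∈ G (Fintype.card ι * a) := by
    simpa using SetLike.prod_mem_graded G (fun _ => a) (fun i => M (π i) i) (F := Finset.univ)
      fun i _ => hM (π i) i
  rw [Units.smul_def]
  exact zsmul_mem hprod _

variable {f : Polynomial R}

lemma repr_root_pow_mem (hG : Monotone G) (hf : f.Monic)
    (hfG : ∀ i, f.coeff i ∈ G (f.natDegree - i)) (n : ℕ) (j : Fin f.natDegree) :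
    (AdjoinRoot.powerBasisAux' hf).repr (AdjoinRoot.root f ^ n) j ∈ G n := by
  induction n using Nat.strong_induction_on with
  | _ n ih =>
    rcases lt_or_ge n f.natDegree with hn | hn
    · have hroot : AdjoinRoot.root f ^ n = AdjoinRoot.powerBasisAux' hf ⟨n, hn⟩ :=
        ((AdjoinRoot.powerBasis' hf).basis_eq_pow ⟨n, hn⟩).symm
      rw [hroot, Basis.repr_self, Finsupp.single_apply]
      split_ifs
      exacts [hG (Nat.zero_le n) (SetLike.one_mem_graded G), zero_mem _]
    · have hrel : AdjoinRoot.root f ^ n = -∑ i ∈ Finset.range f.natDegree,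
          f.coeff i • AdjoinRoot.root f ^ (n - f.natDegree + i) := by
        have hroot := AdjoinRoot.eval₂_root f
        rw [Polynomial.eval₂_eq_sum_range, Finset.sum_range_succ, hf.coeff_natDegree, map_one,
          one_mul, add_comm, ← eq_neg_iff_add_eq_zero] at hroot
        nth_rw 1 [← Nat.sub_add_cancel hn, pow_add, hroot, mul_neg, Finset.mul_sum]
        simp_rw [Algebra.smul_def, AdjoinRoot.algebraMap_eq, pow_add, mul_left_comm]
      rw [hrel]
      simp only [map_neg, map_sum, map_smul, Finsupp.neg_apply, Finsupp.finsetSum_apply,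
        Finsupp.smul_apply, smul_eq_mul]
      refine neg_mem (sum_mem fun i hi => ?_)
      have hi := Finset.mem_range.1 hi
      have := SetLike.mul_mem_graded (hfG i) (ih (n - f.natDegree + i) (by omega))
      rwa [show f.natDegree - i + (n - f.natDegree + i) = n by omega] at this

lemma repr_mem_of_mem_adjoinRootFiltration (hG : Monotone G) (hf : f.Monic)
    (hfG : ∀ i, f.coeff i ∈ G (f.natDegree - i)) {a : ℕ} {s : AdjoinRoot f}
    (hs : s ∈ adjoinRootFiltration G f a) (j : Fin f.natDegree) :
    (AdjoinRoot.powerBasisAux' hf).repr s j ∈ G a := by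
  induction hs using Submodule.span_induction with
  | mem s hs =>
    obtain ⟨b, i, hbi, r, hr, rfl⟩ := hs
    rw [← AdjoinRoot.algebraMap_eq, ← Algebra.smul_def, map_smul]
    exact hG hbi (SetLike.mul_mem_graded hr (repr_root_pow_mem hG hf hfG i j))
  | zero => simp
  | add s t _ _ hs ht => simpa using add_mem hs ht
  | smul c s _ hs => simpa using (G a).smul_mem c hs

lemma norm_mem_of_mem_adjoinRootFiltration (hG : Monotone G) (hf : f.Monic)
    (hfG : ∀ i, f.coeff i ∈ G (f.natDegree - i)) {a : ℕ} {s : AdjoinRoot f}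
    (hs : s ∈ adjoinRootFiltration G f a) :
    Algebra.norm R s ∈ G (f.natDegree * (a + f.natDegree)) := by
  classical
  rw [Algebra.norm_eq_matrix_det (AdjoinRoot.powerBasisAux' hf)]
  have h := det_mem_of_entries_mem (G := G) (a := a + f.natDegree)
    (M := Algebra.leftMulMatrix (AdjoinRoot.powerBasisAux' hf) s) fun i j => by
      rw [Algebra.leftMulMatrix_eq_repr_mul]
      refine repr_mem_of_mem_adjoinRootFiltration hG hf hfG ?_ i
      rw [powerBasisAux'_apply]
      exact monotone_adjoinRootFiltration f (by omega)
        (SetLike.mul_mem_graded hs (root_pow_mem_adjoinRootFiltration f j))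
  simpa using h

end Filtration

section Points

lemma nonempty_algHom_of_isAlgClosed (F A : Type*) [Field F] [IsAlgClosed F] [CommRing A]
    [Nontrivial A] [Algebra F A] [Algebra.FiniteType F A] : Nonempty (A →ₐ[F] F) := by
  obtain ⟨m, hm⟩ := Ideal.exists_maximal A
  let : Field (A ⧸ m) := Ideal.Quotient.field m
  have : Module.Finite F (A ⧸ m) := finite_of_finite_type_of_isJacobsonRing F (A ⧸ m)
  exact ⟨(IsAlgClosed.lift (R := F) (S := A ⧸ m) (M := F)).comp (Ideal.Quotient.mkₐ F m)⟩

lemma exists_algHom_apply_ne_zero (F : Type*) {A : Type*} [Field F] [IsAlgClosed F] [CommRing A]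
    [Algebra F A] [Algebra.FiniteType F A] {s : A} (hs : ¬ IsNilpotent s) :
    ∃ ε : A →ₐ[F] F, ε s ≠ 0 := by
  have : Nontrivial (Localization.Away s) :=
    not_subsingleton_iff_nontrivial.1 fun h =>
      hs <| (IsLocalization.subsingleton_iff (S := Localization.Away s)
        (M := Submonoid.powers s)).1 h
  obtain ⟨ε⟩ := nonempty_algHom_of_isAlgClosed F (Localization.Away s)
  refine ⟨ε.comp (IsScalarTower.toAlgHom F A (Localization.Away s)), ?_⟩
  exact ((IsLocalization.Away.algebraMap_isUnit s).map ε).ne_zero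

variable {K : Type*} [Field K] [Fintype K] {σ A : Type*} [CommRing A] [Algebra K A]
  {f : Polynomial (MvPolynomial σ K)}

lemma mem_range_algebraMap_of_pow_card_eq [IsDomain A] {z : A} (hz : z ^ Fintype.card K = z) :
    z ∈ Set.range (algebraMap K A) := by
  have hdeg := FiniteField.X_pow_card_sub_X_natDegree_eq K (Fintype.one_lt_card (α := K))
  have hmonic : (Polynomial.X ^ Fintype.card K - Polynomial.X : Polynomial K).Monic :=
    Polynomial.monic_X_pow_sub (by simpa using Fintype.one_lt_card)
  have hprod := Polynomial.prod_multiset_X_sub_C_of_monic_of_roots_card_eq hmonic <| by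
    rw [FiniteField.roots_X_pow_card_sub_X, hdeg, ← Finset.card_def, Finset.card_univ]
  rw [FiniteField.roots_X_pow_card_sub_X] at hprod
  have hz0 : ∏ c : K, (z - algebraMap K A c) = 0 := by
    have := congrArg (Polynomial.aeval z) hprod
    simp only [map_multiset_prod, Multiset.map_map, Function.comp_def, map_sub, map_pow,
      Polynomial.aeval_X, Polynomial.aeval_C, hz, sub_self] at this
    exact this
  obtain ⟨c, -, hc⟩ := Finset.prod_eq_zero_iff.1 hz0
  exact ⟨c, (sub_eq_zero.1 hc).symm⟩

lemma eval₂_aeval_pow_card_eq_zero {x : σ → A} {y : A}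
    (h : f.eval₂ (aeval x : MvPolynomial σ K →ₐ[K] A) y = 0) :
    f.eval₂ (aeval fun i => x i ^ Fintype.card K : MvPolynomial σ K →ₐ[K] A)
      (y ^ Fintype.card K) = 0 := by
  have hx : (aeval fun i => x i ^ Fintype.card K : MvPolynomial σ K →ₐ[K] A) =
      (FiniteField.frobeniusAlgHom K A).comp (aeval x) := by
    ext i; simp
  have hy := congrArg (FiniteField.frobeniusAlgHom K A : A →+* A) h
  rwa [Polynomial.hom_eval₂, map_zero, ← AlgHom.comp_toRingHom, ← hx] at hy

lemma exists_eval_eval_eq_zero_of_ne_top {x : σ → A} {y : A}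
    (h : f.eval₂ (aeval x : MvPolynomial σ K →ₐ[K] A) y = 0) {I : Ideal A} (hI : I ≠ ⊤)
    (hx : ∀ i, x i ^ Fintype.card K - x i ∈ I) (hy : y ^ Fintype.card K - y ∈ I) :
    ∃ (a : σ → K) (b : K), (f.map (eval a)).eval b = 0 := by
  obtain ⟨m, hm, hle⟩ := Ideal.exists_le_maximal I hI
  have hrat : ∀ z, z ^ Fintype.card K - z ∈ I →
      Ideal.Quotient.mk m z ∈ Set.range (algebraMap K (A ⧸ m)) := fun z hz =>
    mem_range_algebraMap_of_pow_card_eq <| by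
      rw [← map_pow]
      exact Ideal.Quotient.eq.2 (hle hz)
  choose a ha using fun i => hrat _ (hx i)
  obtain ⟨b, hb⟩ := hrat y hy
  refine ⟨a, b, (algebraMap K (A ⧸ m)).injective ?_⟩
  have hcomp : (algebraMap K (A ⧸ m)).comp (eval a) =
      (Ideal.Quotient.mk m).comp (aeval x : MvPolynomial σ K →ₐ[K] A) := by
    ext i
    · simp
    · simp [ha]
  rw [Polynomial.eval_map, Polynomial.hom_eval₂, hcomp, hb, ← Polynomial.hom_eval₂, h, map_zero,
    map_zero]

end Points

section SelfProduct

variable {σ F : Type*} [CommRing F] (f : Polynomial (MvPolynomial σ F))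

/-- The inclusion `x i ↦ x i + h i` of `F[x]` into the polynomial ring in the variables `h i` over
`S = F[x][Y]/(f)`. -/
noncomputable def translate : MvPolynomial σ F →ₐ[F] MvPolynomial σ (AdjoinRoot f) :=
  aeval fun i => C (AdjoinRoot.of f (X i)) + X i

/-- The coordinate ring of `V × V`, where `V` is the hypersurface `f = 0`, as an extension of the
coordinate ring of `V × 𝔸 ^ σ`. The variables `h i` of the latter are the differences of the
coordinates of the two points, so that they vanish on the diagonal of `V × V`. -/
abbrev SelfProduct : Type _ :=
  AdjoinRoot (f.map (translate f : MvPolynomial σ F →+* MvPolynomial σ (AdjoinRoot f)))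

variable {f}

section IsDomain

lemma injective_aeval_X_sub_C (a : σ → F) :
    Function.Injective (aeval fun i => X i - C (a i) : MvPolynomial σ F →ₐ[F] MvPolynomial σ F) :=
  Function.LeftInverse.injective (g := aeval fun i => X i + C (a i)) fun p => by
    rw [← AlgHom.comp_apply]
    have : ((aeval fun i => X i + C (a i)).comp (aeval fun i => X i - C (a i)) :
      MvPolynomial σ F →ₐ[F] MvPolynomial σ F) = AlgHom.id F _ := by ext i; simp
    rw [this, AlgHom.id_apply]

/-- The restriction to `{P} × V` of functions on `V × V`, where `P` is the `F`-point `ε` of `V`. -/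
noncomputable def specialize (ε : AdjoinRoot f →ₐ[F] F) : SelfProduct f →+* AdjoinRoot f :=
  AdjoinRoot.lift
    ((AdjoinRoot.of f).comp ((aeval fun i => X i - C (ε (AdjoinRoot.of f (X i)))).toRingHom.comp
      (map ε.toRingHom)))
    (AdjoinRoot.root f) <| by
      rw [Polynomial.eval₂_map, ← AdjoinRoot.eval₂_root f]
      congr 1
      ext i <;> simp [translate]

lemma exists_specialize_ne_zero (hf : f.Monic) {b : SelfProduct f} (hb : b ≠ 0) :
    ∃ s : AdjoinRoot f, s ≠ 0 ∧ ∀ ε : AdjoinRoot f →ₐ[F] F, ε s ≠ 0 → specialize ε b ≠ 0 := by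
  have hmonic := hf.map (translate f : MvPolynomial σ F →+* MvPolynomial σ (AdjoinRoot f))
  obtain ⟨p, rfl⟩ : ∃ p, AdjoinRoot.mk _ (p %ₘ f.map _) = b :=
    (AdjoinRoot.mk_surjective b).imp fun p hp => by
      rw [← hp, ← AdjoinRoot.modByMonicHom_mk hmonic, AdjoinRoot.mk_leftInverse hmonic]
  set r := p %ₘ f.map (translate f : MvPolynomial σ F →+* _)
  have hr0 : r ≠ 0 := fun h => hb (by rw [h, map_zero])
  obtain ⟨γ, hγ⟩ := ne_zero_iff.1 (Polynomial.leadingCoeff_ne_zero.2 hr0)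
  refine ⟨_, hγ, fun ε hε => ?_⟩
  have hcoeff : map ε.toRingHom r.leadingCoeff ≠ 0 :=
    ne_zero_iff.2 ⟨γ, by rwa [coeff_map]⟩
  have : Nontrivial F := ⟨_, _, hε⟩
  have := RingHom.domain_nontrivial ε.toRingHom
  rw [specialize, AdjoinRoot.lift_mk, ← Polynomial.eval₂_map, ← AdjoinRoot.algebraMap_eq,
    ← Polynomial.aeval_def, AdjoinRoot.aeval_eq]
  refine AdjoinRoot.mk_ne_zero_of_degree_lt hf (fun h0 => ?_) ?_
  · have hj0 := congrArg (Polynomial.coeff · r.natDegree) h0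
    simp only [Polynomial.coeff_map, Polynomial.coeff_zero, RingHom.comp_apply] at hj0
    exact hcoeff ((injective_iff_map_eq_zero _).1 (injective_aeval_X_sub_C _) _ hj0)
  · refine Polynomial.degree_map_le.trans_lt ?_
    simpa [hf.degree_map] using Polynomial.degree_modByMonic_lt p hmonic

-- A product of two nonzero functions is nonzero on `{P} × V` for general `P`.
lemma isDomain_selfProduct {F : Type*} [Field F] [IsAlgClosed F] [Finite σ]
    {f : Polynomial (MvPolynomial σ F)} (hf : f.Monic) [IsDomain (AdjoinRoot f)] :
    IsDomain (SelfProduct f) := by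
  have : Nontrivial (SelfProduct f) :=
    (nonempty_algHom_of_isAlgClosed F (AdjoinRoot f)).elim fun ε =>
      RingHom.domain_nontrivial (specialize ε)
  have : NoZeroDivisors (SelfProduct f) := ⟨fun {a b} hab => by
    by_contra! h
    obtain ⟨s, hs, hsa⟩ := exists_specialize_ne_zero hf h.1
    obtain ⟨t, ht, htb⟩ := exists_specialize_ne_zero hf h.2
    obtain ⟨ε, hε⟩ := exists_algHom_apply_ne_zero F (s := s * t) (by simp [hs, ht])
    rw [map_mul] at hε
    refine mul_ne_zero (hsa ε (left_ne_zero_of_mul hε)) (htb ε (right_ne_zero_of_mul hε)) ?_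
    rw [← map_mul, hab, map_zero]⟩
  exact NoZeroDivisors.to_isDomain _

end IsDomain

/-- The restriction of functions on `V × V` to the graph of the map `V → V` whose value at `P` has
coordinates `x i + t i` and `w`. -/
noncomputable def evalSelfProduct (t : σ → AdjoinRoot f) (w : AdjoinRoot f)
    (h : f.eval₂ (aeval fun i => AdjoinRoot.of f (X i) + t i :
      MvPolynomial σ F →ₐ[F] AdjoinRoot f) w = 0) : SelfProduct f →+* AdjoinRoot f :=
  AdjoinRoot.lift (eval t) w <| by
    rw [Polynomial.eval₂_map, ← h]
    congr 1
    ext i <;> simp [translate]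

variable (f) in
/-- The polynomial `(f(Z) - f(Y)) / (Z - Y)` over `F[x][Y]/(f)`. -/
noncomputable def dividedDifference : Polynomial (AdjoinRoot f) :=
  f.map (AdjoinRoot.of f) /ₘ (Polynomial.X - Polynomial.C (AdjoinRoot.root f))

lemma dividedDifference_mul_X_sub_C :
    dividedDifference f * (Polynomial.X - Polynomial.C (AdjoinRoot.root f)) =
      f.map (AdjoinRoot.of f) := by
  rw [mul_comm, dividedDifference, Polynomial.mul_divByMonic_eq_iff_isRoot]
  exact AdjoinRoot.isRoot_root f

lemma eval_root_dividedDifference :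
    (dividedDifference f).eval (AdjoinRoot.root f) = AdjoinRoot.mk f (Polynomial.derivative f) := by
  have h := congrArg (fun p => (Polynomial.derivative p).eval (AdjoinRoot.root f))
    (dividedDifference_mul_X_sub_C (f := f))
  simpa [Polynomial.derivative_map, ← Polynomial.aeval_def, Polynomial.eval_map,
    ← AdjoinRoot.algebraMap_eq, AdjoinRoot.aeval_eq] using h

variable (f) in
/-- The function `f(x, Y') / (Y' - Y)` on `V × V`. On the locus `h = 0` of pairs of points with the
same `x`, it vanishes off the diagonal, and it is `∂f/∂Y` on the diagonal. -/
noncomputable def offDiagonalEquation : SelfProduct f :=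
  Polynomial.aeval (AdjoinRoot.root _) (dividedDifference f)

lemma evalSelfProduct_offDiagonalEquation {t : σ → AdjoinRoot f} {w : AdjoinRoot f} (h) :
    evalSelfProduct t w h (offDiagonalEquation f) = (dividedDifference f).eval w := by
  have hcomp : (evalSelfProduct t w h).comp (algebraMap (AdjoinRoot f) (SelfProduct f)) =
      RingHom.id _ := by
    ext <;> simp [evalSelfProduct, AdjoinRoot.algebraMap_eq']
  rw [offDiagonalEquation, Polynomial.aeval_def, Polynomial.hom_eval₂, hcomp, evalSelfProduct,
    AdjoinRoot.lift_root, Polynomial.eval₂_id]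

lemma eval_dividedDifference_mem {x : σ → AdjoinRoot f} {w : AdjoinRoot f}
    (h : f.eval₂ (aeval x : MvPolynomial σ F →ₐ[F] AdjoinRoot f) w = 0) {J : Ideal (AdjoinRoot f)}
    (hx : ∀ i, x i - AdjoinRoot.of f (X i) ∈ J)
    (hJ : J ⊔ Ideal.span {w - AdjoinRoot.root f} = ⊤) : (dividedDifference f).eval w ∈ J := by
  have hfw : f.eval₂ (AdjoinRoot.of f) w ∈ J := by
    have hcomp : (Ideal.Quotient.mk J).comp (AdjoinRoot.of f) =
        (Ideal.Quotient.mk J).comp (aeval x : MvPolynomial σ F →ₐ[F] AdjoinRoot f) := by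
      ext i
      · simp [← AdjoinRoot.algebraMap_eq, IsScalarTower.algebraMap_apply F (MvPolynomial σ F)]
      · simpa using (Ideal.Quotient.eq.2 (hx i)).symm
    rw [← Ideal.Quotient.eq_zero_iff_mem, Polynomial.hom_eval₂, hcomp, ← Polynomial.hom_eval₂, h,
      map_zero]
  rw [← Polynomial.eval_map, ← dividedDifference_mul_X_sub_C, Polynomial.eval_mul] at hfw
  obtain ⟨a, ha, b, hb, hab⟩ := Submodule.mem_sup.1 ((Ideal.eq_top_iff_one _).1 hJ)
  obtain ⟨c, rfl⟩ := Ideal.mem_span_singleton'.1 hb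
  rw [← mul_one ((dividedDifference f).eval w), ← hab, mul_add, mul_left_comm]
  exact J.add_mem (J.mul_mem_left _ ha) (J.mul_mem_left _ (by simpa using hfw))

end SelfProduct

section Levels

variable {σ F : Type*} [CommRing F] {f : Polynomial (MvPolynomial σ F)}

variable (f) in
/-- The filtration of `F[x][Y]/(f)` by the total degree in `x` and `Y`. -/
noncomputable abbrev degreeFiltration : ℕ → Submodule F (AdjoinRoot f) :=
  adjoinRootFiltration (restrictTotalDegree σ F) f

variable (f) in
/-- The filtration of the functions on `V × V` by the total degree in `x`, `Y` and `Y'`; the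
variables `h i` have level `0`. -/
noncomputable abbrev selfProductFiltration : ℕ → Submodule F (SelfProduct f) :=
  adjoinRootFiltration (coeffFiltration σ (degreeFiltration f))
    (f.map (translate f : MvPolynomial σ F →+* MvPolynomial σ (AdjoinRoot f)))

lemma monotone_degreeFiltration : Monotone (degreeFiltration f) :=
  monotone_adjoinRootFiltration f

lemma of_mem_degreeFiltration {p : MvPolynomial σ F} {a : ℕ} (hp : p.totalDegree ≤ a) :
    AdjoinRoot.of f p ∈ degreeFiltration f a := by
  simpa using of_mul_root_pow_mem_adjoinRootFiltration f ((mem_restrictTotalDegree _ _ _).2 hp) 0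

lemma translate_mem {p : MvPolynomial σ F} {n : ℕ} (hp : p.totalDegree ≤ n) :
    translate f p ∈ coeffFiltration σ (degreeFiltration f) n := by
  have hmono := monotone_coeffFiltration σ (monotone_degreeFiltration (f := f))
  refine aeval_mem_of_totalDegree_le hmono (fun i => add_mem ?_ ?_) hp
  · exact C_mem_coeffFiltration (of_mem_degreeFiltration <|
      (totalDegree_monomial_le _ _).trans (by simp))
  · exact hmono zero_le_one (X_mem_coeffFiltration i)

lemma coeff_dividedDifference_mem (hdeg : ∀ i, (f.coeff i).totalDegree ≤ f.natDegree - i)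
    {i : ℕ} (hi : i < f.natDegree) :
    (dividedDifference f).coeff i ∈ degreeFiltration f (f.natDegree - 1 - i) := by
  rw [dividedDifference, Polynomial.coeff_divByMonic_X_sub_C]
  refine sum_mem fun j hj => ?_
  have hj := Finset.mem_Icc.1 hj
  have hj' : j ≤ f.natDegree := hj.2.trans Polynomial.natDegree_map_le
  rw [Polynomial.coeff_map]
  have := SetLike.mul_mem_graded (root_pow_mem_adjoinRootFiltration f (j - (i + 1)))
    (of_mem_degreeFiltration (f := f) (hdeg j))
  rwa [show j - (i + 1) + (f.natDegree - j) = f.natDegree - 1 - i by omega] at this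

lemma offDiagonalEquation_mem (hdeg : ∀ i, (f.coeff i).totalDegree ≤ f.natDegree - i) :
    offDiagonalEquation f ∈ selfProductFiltration f f.natDegree := by
  rw [offDiagonalEquation, Polynomial.aeval_eq_sum_range]
  refine sum_mem fun i _ => ?_
  rcases lt_or_ge i f.natDegree with hi | hi
  · rw [Algebra.smul_def]
    refine monotone_adjoinRootFiltration _ (show f.natDegree - 1 - i + i ≤ f.natDegree by omega)
      (of_mul_root_pow_mem_adjoinRootFiltration _ (C_mem_coeffFiltration
        (coeff_dividedDifference_mem hdeg hi)) i)
  · have h0 : (dividedDifference f).coeff i = 0 := by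
      rw [dividedDifference, Polynomial.coeff_divByMonic_X_sub_C, Finset.Icc_eq_empty,
        Finset.sum_empty]
      have := Polynomial.natDegree_map_le (f := AdjoinRoot.of f) (p := f)
      omega
    simp [h0]

end Levels

section Counting

lemma exists_pow_mul_lt_succ_pow (D C b m : ℕ) :
    ∃ k, D ^ k * (b * (k * C + 1) ^ m) < (D + 1) ^ k := by
  have hlim := (tendsto_pow_const_mul_const_pow_of_lt_one m (r := (D : ℝ) / (D + 1))
    (by positivity) (by rw [div_lt_one (by positivity)]; linarith)).const_mul
    ((b : ℝ) * (C + 1) ^ m)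
  rw [mul_zero] at hlim
  obtain ⟨k, hk, hk1⟩ := ((hlim.eventually_lt_const one_pos).and
    (Filter.eventually_ge_atTop 1)).exists
  refine ⟨k, ?_⟩
  have hbase : k * C + 1 ≤ (C + 1) * k := by nlinarith
  refine (Nat.mul_le_mul_left _ (Nat.mul_le_mul_left b (Nat.pow_le_pow_left hbase m))).trans_lt ?_
  rw [div_pow, ← mul_div_assoc, ← mul_div_assoc, div_lt_one (by positivity)] at hk
  rw [mul_pow]
  exact_mod_cast (by linarith : (D : ℝ) ^ k * (b * ((C + 1) ^ m * k ^ m)) < (D + 1) ^ k)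

lemma exists_le_mul_lt_mul_of_le_mul_pow (D C b m : ℕ) : ∃ B, ∀ u : ℕ → ℕ, 0 < u 0 →
    (∀ n, u n ≤ b * (n + 1) ^ m) → ∃ n ≤ B, D * u (n + C) < (D + 1) * u n := by
  obtain ⟨k, hk⟩ := exists_pow_mul_lt_succ_pow D C b m
  refine ⟨k * C, fun u hu hub => ?_⟩
  by_contra! hcon
  have hgrowth (i : ℕ) (hi : i ≤ k) : (D + 1) ^ i ≤ D ^ i * u (i * C) := by
    induction i with
    | zero => simpa using Nat.succ_le_of_lt hu
    | succ i ih =>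
      calc (D + 1) ^ (i + 1) ≤ (D + 1) * (D ^ i * u (i * C)) := by
            rw [pow_succ']; gcongr; exact ih (by omega)
        _ = D ^ i * ((D + 1) * u (i * C)) := by ring
        _ ≤ D ^ i * (D * u (i * C + C)) := by
            exact Nat.mul_le_mul_left _ (hcon _ (Nat.mul_le_mul_right C (by omega)))
        _ = D ^ (i + 1) * u ((i + 1) * C) := by rw [add_one_mul]; ring
  exact (((hgrowth k le_rfl).trans (Nat.mul_le_mul_left _ (hub _))).trans_lt hk).false

variable (σ : Type*) [Finite σ]

/-- The exponents of the monomials of degree less than `n`. -/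
noncomputable def monomialsBelow (n : ℕ) : Finset (σ →₀ ℕ) :=
  (Finsupp.finite_of_degree_lt n).toFinset

variable {σ}

lemma mem_monomialsBelow {n : ℕ} {γ : σ →₀ ℕ} : γ ∈ monomialsBelow σ n ↔ γ.degree < n := by
  simp [monomialsBelow]

lemma card_monomialsBelow_le (n : ℕ) : (monomialsBelow σ (n + 1)).card ≤ (n + 1) ^ Nat.card σ := by
  classical
  have := Fintype.ofFinite σ
  have hle (γ : monomialsBelow σ (n + 1)) (i : σ) : γ.1 i < n + 1 :=
    (Finsupp.le_degree i γ.1).trans_lt (mem_monomialsBelow.1 γ.2)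
  have h := Fintype.card_le_of_injective
    (fun (γ : monomialsBelow σ (n + 1)) (i : σ) => (⟨γ.1 i, hle γ i⟩ : Fin (n + 1)))
    fun γ δ h => Subtype.ext <| Finsupp.ext fun i => congrArg Fin.val (congrFun h i)
  simpa using h

lemma finrank_restrictTotalDegree (F : Type*) [Field F] (n : ℕ) :
    finrank F (restrictTotalDegree σ F n) = (monomialsBelow σ (n + 1)).card := by
  rw [restrictTotalDegree, finrank_eq_nat_card_basis (basisRestrictSupport F _),
    ← Nat.card_eq_finsetCard]
  exact Nat.card_congr (Equiv.subtypeEquivRight fun γ => by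
    rw [mem_monomialsBelow, Nat.lt_succ_iff]; rfl)

end Counting

section FiniteDimensional

variable {σ F : Type*} [Field F] {f : Polynomial (MvPolynomial σ F)}

lemma exists_injective_degreeFiltration (hf : f.Monic)
    (hdeg : ∀ i, (f.coeff i).totalDegree ≤ f.natDegree - i) (a : ℕ) :
    ∃ Φ : degreeFiltration f a →ₗ[F] (Fin f.natDegree → restrictTotalDegree σ F a),
      Function.Injective Φ := by
  let b := AdjoinRoot.powerBasisAux' hf
  refine ⟨LinearMap.pi fun j => ((b.coord j).restrictScalars F).restrict fun s hs =>
      repr_mem_of_mem_adjoinRootFiltration (monotone_restrictTotalDegree σ) hf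
        (fun i => (mem_restrictTotalDegree _ _ _).2 (hdeg i)) hs j, fun s t h => ?_⟩
  exact Subtype.ext <| b.ext_elem fun j => congrArg Subtype.val (congrFun h j)

variable [Finite σ]

lemma finiteDimensional_degreeFiltration (hf : f.Monic)
    (hdeg : ∀ i, (f.coeff i).totalDegree ≤ f.natDegree - i) (a : ℕ) :
    FiniteDimensional F (degreeFiltration f a) :=
  (exists_injective_degreeFiltration hf hdeg a).elim Module.Finite.of_injective

lemma finrank_degreeFiltration_le (hf : f.Monic)
    (hdeg : ∀ i, (f.coeff i).totalDegree ≤ f.natDegree - i) (a : ℕ) :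
    finrank F (degreeFiltration f a) ≤ f.natDegree * (a + 1) ^ Nat.card σ := by
  obtain ⟨Φ, hΦ⟩ := exists_injective_degreeFiltration hf hdeg a
  refine (LinearMap.finrank_le_finrank_of_injective hΦ).trans ?_
  rw [Module.finrank_pi_fintype]
  simpa [finrank_restrictTotalDegree] using
    Nat.mul_le_mul_left f.natDegree (card_monomialsBelow_le (σ := σ) a)

end FiniteDimensional

section Approximation

lemma mem_pow_idealOfVars_iff_le_order {σ R : Type*} [CommRing R] {p : MvPolynomial σ R} {n : ℕ} :
    p ∈ idealOfVars σ R ^ n ↔ (n : ℕ∞) ≤ (p : MvPowerSeries σ R).order := by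
  rw [mem_pow_idealOfVars_iff']
  refine ⟨fun h => MvPowerSeries.nat_le_order fun γ hγ => by simpa using h γ hγ, fun h γ hγ => ?_⟩
  simpa using MvPowerSeries.coeff_of_lt_order (f := (p : MvPowerSeries σ R)) (d := γ)
    (lt_of_lt_of_le (by exact_mod_cast hγ) h)

lemma mem_pow_idealOfVars_of_mul_mem {σ R : Type*} [CommRing R] [NoZeroDivisors R]
    {p c : MvPolynomial σ R} {n : ℕ} (hc : constantCoeff c ≠ 0)
    (h : p * c ∈ idealOfVars σ R ^ n) : p ∈ idealOfVars σ R ^ n := by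
  have hc0 : (c : MvPowerSeries σ R).order = 0 := by
    by_contra h0
    have := MvPowerSeries.order_ne_zero_iff_constCoeff_eq_zero.1 h0
    rw [← MvPowerSeries.coeff_zero_eq_constantCoeff_apply, coeff_coe] at this
    exact hc this
  rw [mem_pow_idealOfVars_iff_le_order] at h ⊢
  simpa [MvPowerSeries.order_mul, hc0] using h

variable {σ F S ι : Type*} [Finite σ] [Field F] [CommRing S] [Algebra F S]
  {G : ℕ → Submodule F S} [SetLike.GradedMonoid G] [Fintype ι] {a b k M : ℕ}
  [FiniteDimensional F (G a)] [FiniteDimensional F (G (a + b))] {c : ι → MvPolynomial σ S}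

lemma exists_coeff_mul_eq_zero (hkM : k ≤ M)
    (hcard : Fintype.card ι * ((monomialsBelow σ M).card - (monomialsBelow σ k).card) *
      finrank F (G (a + b)) < (monomialsBelow σ M).card * finrank F (G a))
    (hc : ∀ j, c j ∈ coeffFiltration σ G b) :
    ∃ z ∈ coeffFiltration σ G a, z ∉ idealOfVars σ S ^ M ∧
      ∀ j γ, k ≤ γ.degree → γ.degree < M → (z * c j).coeff γ = 0 := by
  classical
  let ofCoeffs : (monomialsBelow σ M → G a) →ₗ[F] MvPolynomial σ S :=
    ∑ γ, (monomial γ.1).restrictScalars F ∘ₗ (G a).subtype ∘ₗ LinearMap.proj γ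
  have hcoeff (u) (γ : σ →₀ ℕ) : (ofCoeffs u).coeff γ =
      if h : γ ∈ monomialsBelow σ M then (u ⟨γ, h⟩ : S) else 0 := by
    have hsum : (ofCoeffs u).coeff γ = ∑ δ, if δ.1 = γ then (u δ : S) else 0 := by
      simp [ofCoeffs, coeff_sum, coeff_monomial]
    rw [hsum]
    split_ifs with h
    · rw [Finset.sum_eq_single ⟨γ, h⟩ (fun δ _ hδ => if_neg fun h => hδ (Subtype.ext h)) (by simp),
        if_pos rfl]
    · exact Finset.sum_eq_zero fun δ _ => if_neg fun (hδ : δ.1 = γ) => h (hδ ▸ δ.2)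
  have hG (u) : ofCoeffs u ∈ coeffFiltration σ G a := fun γ => by
    rw [hcoeff]
    split_ifs
    exacts [SetLike.coe_mem _, zero_mem _]
  let obstruction : (monomialsBelow σ M → G a) →ₗ[F]
      ι → ↥(monomialsBelow σ M \ monomialsBelow σ k) → G (a + b) :=
    LinearMap.pi fun j => LinearMap.pi fun γ =>
      ((lcoeff S γ.1).restrictScalars F ∘ₗ LinearMap.mulRight F (c j) ∘ₗ ofCoeffs).codRestrict _
        fun u => SetLike.mul_mem_graded (hG u) (hc j) γ.1
  have hsub : monomialsBelow σ k ⊆ monomialsBelow σ M := fun γ hγ =>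
    mem_monomialsBelow.2 ((mem_monomialsBelow.1 hγ).trans_le hkM)
  obtain ⟨u, hu, hu0⟩ := (Submodule.ne_bot_iff _).1 <|
    LinearMap.ker_ne_bot_of_finrank_lt (f := obstruction) <| by
      simpa [finrank_pi_fintype, Finset.card_sdiff_of_subset hsub, mul_assoc] using hcard
  refine ⟨ofCoeffs u, hG u, fun hmem => hu0 (funext fun γ => Subtype.ext ?_), fun j γ hk hM => ?_⟩
  · simpa [hcoeff] using
      (mem_pow_idealOfVars_iff' M _).1 hmem γ.1 (mem_monomialsBelow.1 γ.2)
  · have hγ : γ ∈ monomialsBelow σ M \ monomialsBelow σ k := by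
      simp [mem_monomialsBelow, hk, hM]
    exact congrArg Subtype.val (congrFun (congrFun (LinearMap.mem_ker.1 hu) j) ⟨γ, hγ⟩)

lemma exists_approximation [IsDomain S] (hkM : k ≤ M)
    (hcard : Fintype.card ι * ((monomialsBelow σ M).card - (monomialsBelow σ k).card) *
      finrank F (G (a + b)) < (monomialsBelow σ M).card * finrank F (G a))
    (hc : ∀ j, c j ∈ coeffFiltration σ G b) (hc0 : ∃ j, constantCoeff (c j) ≠ 0) :
    ∃ p : ι → MvPolynomial σ S, p ≠ 0 ∧
      (∀ j, p j ∈ coeffFiltration σ G (a + b) ∧ (p j).totalDegree ≤ k) ∧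
      ∃ z, ∀ j, z * c j - p j ∈ idealOfVars σ S ^ M := by
  obtain ⟨z, hzG, hzM, hz⟩ := exists_coeff_mul_eq_zero hkM hcard hc
  let p (j : ι) : MvPolynomial σ S :=
    MvPowerSeries.truncTotal k (z * c j : MvPolynomial σ S)
  have hcoeff (j γ) : (p j).coeff γ = if γ.degree < k then (z * c j).coeff γ else 0 := by
    rw [MvPowerSeries.coeff_truncTotal_eq_ite, coeff_coe]
  have hp (j) : z * c j - p j ∈ idealOfVars σ S ^ M :=
    (mem_pow_idealOfVars_iff' M _).2 fun γ hγ => by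
      rw [coeff_sub, hcoeff]
      split_ifs with h
      exacts [sub_self _, by rw [hz j γ (not_lt.1 h) hγ, sub_zero]]
  refine ⟨p, fun h0 => ?_, fun j => ⟨fun γ => ?_, ?_⟩, z, hp⟩
  · obtain ⟨j, hj⟩ := hc0
    exact hzM (mem_pow_idealOfVars_of_mul_mem hj (by simpa [h0] using hp j))
  · rw [hcoeff]
    split_ifs
    exacts [SetLike.mul_mem_graded hzG (hc j) γ, zero_mem _]
  · refine Finset.sup_le fun γ hγ => ?_
    by_contra! h
    exact mem_support_iff.1 hγ ((hcoeff j γ).trans (if_neg h.not_gt))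

end Approximation

section Norm

variable {R S ι : Type*} [CommRing R] [CommRing S] [Algebra R S]

lemma dvd_algebraMap_norm [Module.Free R S] [Module.Finite R S] (s : S) :
    s ∣ algebraMap R S (Algebra.norm R s) := by
  set χ := (Algebra.lmul R S s).charpoly
  have hchar : Polynomial.aeval s χ = 0 := by
    have h := LinearMap.aeval_self_charpoly (Algebra.lmul R S s)
    rw [Polynomial.aeval_algHom_apply] at h
    exact Algebra.lmul_injective (h.trans (map_zero _).symm)
  rw [← Polynomial.X_mul_divX_add χ, map_add, map_mul, Polynomial.aeval_X,
    Polynomial.aeval_C] at hchar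
  have hdvd : s ∣ algebraMap R S (χ.coeff 0) := by
    rw [eq_neg_of_add_eq_zero_right hchar]
    exact (dvd_mul_right _ _).neg_right
  rw [Algebra.norm_apply, LinearMap.det_eq_sign_charpoly_coeff, map_mul]
  exact hdvd.mul_left _

lemma apply_mem_of_mem_ideal_map {I : Ideal R} {s : S} (hs : s ∈ I.map (algebraMap R S))
    (ℓ : S →ₗ[R] R) : ℓ s ∈ I := by
  have hs' : s ∈ I • (⊤ : Submodule R S) := by
    rw [Ideal.smul_top_eq_map]
    exact hs
  refine Submodule.smul_induction_on hs' (fun r hr t _ => ?_) fun x y hx hy => ?_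
  · rw [map_smul, smul_eq_mul]
    exact I.mul_mem_right _ hr
  · rw [map_add]
    exact I.add_mem hx hy

lemma norm_mem_pow_card_of_mem_map [Fintype ι] (b : Basis ι R S) {I : Ideal R} {s : S}
    (hs : s ∈ I.map (algebraMap R S)) : Algebra.norm R s ∈ I ^ Fintype.card ι := by
  classical
  rw [Algebra.norm_eq_matrix_det b]
  have := det_mem_of_entries_mem (G := fun n => (I ^ n : Ideal R)) (a := 1)
    (M := Algebra.leftMulMatrix b s) fun i j => by
      rw [Algebra.leftMulMatrix_eq_repr_mul, pow_one]
      exact apply_mem_of_mem_ideal_map (Ideal.mul_mem_right _ _ hs) (b.coord i)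
  simpa using this

end Norm

section FrobeniusGraph

lemma exists_coeff_eq_eval_eq {σ R S : Type*} [CommRing R] [CommRing S] [Algebra R S]
    (ℓ : S →ₗ[R] R) (p : MvPolynomial σ S) :
    ∃ r : MvPolynomial σ R, (∀ γ, r.coeff γ = ℓ (p.coeff γ)) ∧
      ∀ z : σ → R, eval z r = ℓ (eval (fun i => algebraMap R S (z i)) p) := by
  classical
  refine ⟨∑ γ ∈ p.support, monomial γ (ℓ (p.coeff γ)), fun γ => ?_, fun z => ?_⟩
  · by_cases h : p.coeff γ = 0 <;> simp [coeff_sum, coeff_monomial, h]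
  · rw [map_sum, eval_eq, map_sum]
    refine Finset.sum_congr rfl fun γ _ => ?_
    have hprod : ∏ i ∈ γ.support, algebraMap R S (z i) ^ γ i =
        algebraMap R S (γ.prod fun i n => z i ^ n) := by simp [Finsupp.prod]
    rw [eval_monomial, hprod, mul_comm (p.coeff γ), ← Algebra.smul_def, map_smul, smul_eq_mul,
      mul_comm]

variable {σ F : Type*} [Finite σ] [Field F] {f : Polynomial (MvPolynomial σ F)} {q : ℕ}

lemma eval_frobeniusDiff_ne_zero (hf : f.Monic)
    (hdeg : ∀ i, (f.coeff i).totalDegree ≤ f.natDegree - i) (hq : 1 < q) {a : ℕ} (haq : a < q)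
    {p : MvPolynomial σ (AdjoinRoot f)} (hp : p ∈ coeffFiltration σ (degreeFiltration f) a)
    (hp0 : p ≠ 0) : eval (fun i => AdjoinRoot.of f (frobeniusDiff F q i)) p ≠ 0 := by
  obtain ⟨γ, hγ⟩ := ne_zero_iff.1 hp0
  let b := AdjoinRoot.powerBasisAux' hf
  obtain ⟨j, hj⟩ : ∃ j, b.coord j (p.coeff γ) ≠ 0 := by
    by_contra! h
    exact hγ (b.ext_elem fun j => by simpa using h j)
  obtain ⟨r, hr, heval⟩ := exists_coeff_eq_eval_eq (b.coord j) p
  intro h0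
  refine aeval_frobeniusDiff_ne_zero (R := F) hq (p := r) (fun β => ?_)
    (ne_zero_iff.2 ⟨γ, by rwa [hr]⟩) ?_
  · rw [hr]
    refine lt_of_le_of_lt ((mem_restrictTotalDegree _ _ _).1 ?_) haq
    exact repr_mem_of_mem_adjoinRootFiltration (monotone_restrictTotalDegree σ) hf
      (fun i => (mem_restrictTotalDegree _ _ _).2 (hdeg i)) (hp β) j
  · rw [aeval_eq_eval, heval]
    simp only [AdjoinRoot.algebraMap_eq, h0, map_zero]

lemma evalSelfProduct_frobeniusDiff_ne_zero [IsDomain (AdjoinRoot f)] [IsDomain (SelfProduct f)]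
    (hf : f.Monic) (hdeg : ∀ i, (f.coeff i).totalDegree ≤ f.natDegree - i) {a : ℕ} (hq : 1 < q)
    (haq : f.natDegree * (a + f.natDegree) < q) {P : SelfProduct f}
    (hP : P ∈ selfProductFiltration f a) (hP0 : P ≠ 0) {w : AdjoinRoot f} (h) :
    evalSelfProduct (fun i => AdjoinRoot.of f (frobeniusDiff F q i)) w h P ≠ 0 := by
  have hfT := hf.map (translate f : MvPolynomial σ F →+* MvPolynomial σ (AdjoinRoot f))
  have := hfT.free_adjoinRoot
  have := hfT.finite_adjoinRoot
  have hdegT : (f.map (translate f : MvPolynomial σ F →+* MvPolynomial σ (AdjoinRoot f))).natDegree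
      = f.natDegree := hf.natDegree_map _
  have hnorm : Algebra.norm (MvPolynomial σ (AdjoinRoot f)) P ∈ coeffFiltration σ
      (degreeFiltration f) (f.natDegree * (a + f.natDegree)) := by
    have := norm_mem_of_mem_adjoinRootFiltration
      (monotone_coeffFiltration σ (monotone_degreeFiltration (f := f))) hfT (fun i => ?_) hP
    · rwa [hdegT] at this
    · rw [hdegT, Polynomial.coeff_map]
      exact translate_mem (hdeg i)
  have hne := eval_frobeniusDiff_ne_zero hf hdeg hq haq hnorm (Algebra.norm_ne_zero_iff.2 hP0)
  obtain ⟨c, hc⟩ := dvd_algebraMap_norm (R := MvPolynomial σ (AdjoinRoot f)) P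
  intro h0
  have hcP := congrArg (evalSelfProduct _ w h) hc
  rw [map_mul, h0, zero_mul, AdjoinRoot.algebraMap_eq, evalSelfProduct, AdjoinRoot.lift_of] at hcP
  exact hne hcP

end FrobeniusGraph

section SelfProductBasis

lemma mem_ideal_map_of_repr_mem {R S ι : Type*} [CommRing R] [CommRing S] [Algebra R S] [Finite ι]
    (b : Basis ι R S) {I : Ideal R} {s : S} (h : ∀ j, b.repr s j ∈ I) :
    s ∈ I.map (algebraMap R S) := by
  have := Fintype.ofFinite ι
  rw [← b.sum_repr s]
  refine sum_mem fun j _ => ?_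
  rw [Algebra.smul_def]
  exact Ideal.mul_mem_right _ _ (Ideal.mem_map_of_mem _ (h j))

variable {σ F : Type*} [CommRing F] {f : Polynomial (MvPolynomial σ F)} [Nontrivial (AdjoinRoot f)]

/-- The basis `1, Y', …, Y' ^ (e - 1)` of the functions on `V × V` over the polynomials in the
variables `h i`, where `e` is the degree of `f`. -/
noncomputable def selfProductBasis (hf : f.Monic) :
    Basis (Fin f.natDegree) (MvPolynomial σ (AdjoinRoot f)) (SelfProduct f) :=
  (AdjoinRoot.powerBasisAux' (hf.map _)).reindex (finCongr (hf.natDegree_map _))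

lemma selfProductBasis_apply (hf : f.Monic) (j : Fin f.natDegree) :
    selfProductBasis hf j = AdjoinRoot.root _ ^ (j : ℕ) := by
  rw [selfProductBasis, Basis.reindex_apply, powerBasisAux'_apply]
  rfl

lemma evalSelfProduct_equivFun_symm (hf : f.Monic) {t : σ → AdjoinRoot f} {w : AdjoinRoot f} (h)
    (p : Fin f.natDegree → MvPolynomial σ (AdjoinRoot f)) :
    evalSelfProduct t w h ((selfProductBasis hf).equivFun.symm p) =
      ∑ j, eval t (p j) * w ^ (j : ℕ) := by
  simp only [Basis.equivFun_symm_apply, map_sum, selfProductBasis_apply, Algebra.smul_def,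
    AdjoinRoot.algebraMap_eq, map_mul, map_pow]
  simp only [evalSelfProduct, AdjoinRoot.lift_of, AdjoinRoot.lift_root]

lemma equivFun_symm_mem_selfProductFiltration (hf : f.Monic) {a : ℕ}
    {p : Fin f.natDegree → MvPolynomial σ (AdjoinRoot f)}
    (hp : ∀ j, p j ∈ coeffFiltration σ (degreeFiltration f) a) :
    (selfProductBasis hf).equivFun.symm p ∈ selfProductFiltration f (a + f.natDegree) := by
  rw [Basis.equivFun_symm_apply]
  refine sum_mem fun j _ => ?_
  rw [selfProductBasis_apply, Algebra.smul_def, AdjoinRoot.algebraMap_eq]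
  exact monotone_adjoinRootFiltration _ (Nat.add_le_add_left j.2.le a)
    (of_mul_root_pow_mem_adjoinRootFiltration _ (hp j) j)

lemma repr_mem_of_mem_selfProductFiltration (hf : f.Monic)
    (hdeg : ∀ i, (f.coeff i).totalDegree ≤ f.natDegree - i) {a : ℕ} {P : SelfProduct f}
    (hP : P ∈ selfProductFiltration f a) (j : Fin f.natDegree) :
    (selfProductBasis hf).repr P j ∈ coeffFiltration σ (degreeFiltration f) a := by
  rw [selfProductBasis, Basis.repr_reindex_apply]
  refine repr_mem_of_mem_adjoinRootFiltration
    (monotone_coeffFiltration σ monotone_degreeFiltration) _ (fun i => ?_) hP _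
  rw [Polynomial.coeff_map, hf.natDegree_map]
  exact translate_mem (hdeg i)

end SelfProductBasis

section Approximant

variable {σ F : Type*} [Field F] {f : Polynomial (MvPolynomial σ F)} [IsDomain (AdjoinRoot f)]

lemma exists_constantCoeff_repr_offDiagonalEquation_pow_ne_zero (hf : f.Monic)
    (hder : Polynomial.derivative f ≠ 0) (M : ℕ) :
    ∃ j, constantCoeff ((selfProductBasis hf).repr (offDiagonalEquation f ^ M) j) ≠ 0 := by
  have hdiag : f.eval₂ (aeval fun i => AdjoinRoot.of f (X i) + 0 : MvPolynomial σ F →ₐ[F] _)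
      (AdjoinRoot.root f) = 0 := by
    rw [← AdjoinRoot.eval₂_root f]
    congr 1
    ext i
    · simp [← AdjoinRoot.algebraMap_eq, IsScalarTower.algebraMap_apply F (MvPolynomial σ F)]
    · simp
  by_contra! h
  have h0 : evalSelfProduct _ _ hdiag (offDiagonalEquation f ^ M) = 0 := by
    rw [← (selfProductBasis hf).equivFun.symm_apply_apply (offDiagonalEquation f ^ M),
      evalSelfProduct_equivFun_symm]
    exact Finset.sum_eq_zero fun j _ => by
      rw [Basis.equivFun_apply, eval_zero', h, zero_mul]
  rw [map_pow, evalSelfProduct_offDiagonalEquation, eval_root_dividedDifference] at h0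
  exact AdjoinRoot.mk_ne_zero_of_degree_lt hf hder (Polynomial.degree_derivative_lt hf.ne_zero)
    (eq_zero_of_pow_eq_zero h0)

lemma exists_approximant [Finite σ] (hf : f.Monic)
    (hdeg : ∀ i, (f.coeff i).totalDegree ≤ f.natDegree - i)
    (hder : Polynomial.derivative f ≠ 0) {a k M : ℕ} (hkM : k ≤ M)
    (hM : 2 * f.natDegree * ((monomialsBelow σ M).card - (monomialsBelow σ k).card) <
      (monomialsBelow σ M).card)
    (ha : finrank F (degreeFiltration f (a + f.natDegree * M)) <
      2 * finrank F (degreeFiltration f a)) :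
    ∃ p : Fin f.natDegree → MvPolynomial σ (AdjoinRoot f), p ≠ 0 ∧
      (∀ j, p j ∈ coeffFiltration σ (degreeFiltration f) (a + f.natDegree * M) ∧
        (p j).totalDegree ≤ k) ∧
      ∃ z, z * offDiagonalEquation f ^ M - (selfProductBasis hf).equivFun.symm p ∈
        (idealOfVars σ (AdjoinRoot f) ^ M).map (algebraMap _ (SelfProduct f)) := by
  have := finiteDimensional_degreeFiltration hf hdeg
  have hg : offDiagonalEquation f ^ M ∈ selfProductFiltration f (f.natDegree * M) := by
    rw [mul_comm]
    exact SetLike.pow_mem_graded M (offDiagonalEquation_mem hdeg)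
  have hcard : Fintype.card (Fin f.natDegree) *
      ((monomialsBelow σ M).card - (monomialsBelow σ k).card) *
        finrank F (degreeFiltration f (a + f.natDegree * M)) <
      (monomialsBelow σ M).card * finrank F (degreeFiltration f a) := by
    rw [Fintype.card_fin]
    generalize (monomialsBelow σ M).card - (monomialsBelow σ k).card = D at hM ⊢
    nlinarith
  obtain ⟨p, hp0, hp, z, hz⟩ := exists_approximation hkM hcard
    (repr_mem_of_mem_selfProductFiltration hf hdeg hg)
    (exists_constantCoeff_repr_offDiagonalEquation_pow_ne_zero hf hder M)
  refine ⟨p, hp0, hp, algebraMap _ _ z, mem_ideal_map_of_repr_mem (selfProductBasis hf)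
    fun j => ?_⟩
  rw [← Algebra.smul_def, ← Basis.equivFun_apply, map_sub, map_smul, LinearEquiv.apply_symm_apply]
  exact hz j

end Approximant

section DegreeBound

lemma evalSelfProduct_mem_pow {σ F : Type*} [CommRing F] {f : Polynomial (MvPolynomial σ F)}
    {t : σ → AdjoinRoot f} {w : AdjoinRoot f} (h) {J : Ideal (AdjoinRoot f)} (ht : ∀ i, t i ∈ J)
    {M : ℕ} {P : SelfProduct f} (hP : P ∈ (idealOfVars σ (AdjoinRoot f) ^ M).map (algebraMap _ _)) :
    evalSelfProduct t w h P ∈ J ^ M := by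
  have hcomp : (evalSelfProduct t w h).comp
      (algebraMap (MvPolynomial σ (AdjoinRoot f)) (SelfProduct f)) = eval t :=
    RingHom.ext fun p => by simp [evalSelfProduct, AdjoinRoot.algebraMap_eq]
  have hle : (idealOfVars σ (AdjoinRoot f)).map (eval t) ≤ J := by
    rw [idealOfVars, Ideal.map_span, Ideal.span_le]
    rintro _ ⟨_, ⟨i, rfl⟩, rfl⟩
    simpa using ht i
  have := Ideal.mem_map_of_mem (evalSelfProduct t w h) hP
  rw [Ideal.map_map, hcomp, Ideal.map_pow] at this
  exact Ideal.pow_right_mono hle M this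

lemma frobeniusDiff_mem_degreeFiltration {σ F : Type*} [CommRing F] [Nontrivial F]
    {f : Polynomial (MvPolynomial σ F)} {q : ℕ} (hq : 0 < q) (i : σ) :
    AdjoinRoot.of f (frobeniusDiff F q i) ∈ degreeFiltration f q := by
  refine of_mem_degreeFiltration ((totalDegree_sub _ _).trans (max_le ?_ ?_))
  · exact (totalDegree_X_pow i q).le
  · exact (totalDegree_X i).trans_le hq

lemma evalSelfProduct_mem_degreeFiltration {σ F : Type*} [CommRing F]
    {f : Polynomial (MvPolynomial σ F)} [Nontrivial (AdjoinRoot f)] (hf : f.Monic)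
    {t : σ → AdjoinRoot f} {w : AdjoinRoot f} (h) {a k q : ℕ}
    (ht : ∀ i, t i ∈ degreeFiltration f q) (hw : w ∈ degreeFiltration f q)
    {p : Fin f.natDegree → MvPolynomial σ (AdjoinRoot f)}
    (hp : ∀ j, p j ∈ coeffFiltration σ (degreeFiltration f) a ∧ (p j).totalDegree ≤ k) :
    evalSelfProduct t w h ((selfProductBasis hf).equivFun.symm p) ∈
      degreeFiltration f (a + k * q + (f.natDegree - 1) * q) := by
  rw [evalSelfProduct_equivFun_symm]
  refine sum_mem fun j _ => ?_
  have hpj : eval t (p j) ∈ degreeFiltration f (a + k * q) :=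
    eval₂_mem_of_totalDegree_le (φ := RingHom.id _) monotone_degreeFiltration (hp j).1 ht (hp j).2
  refine monotone_degreeFiltration ?_ (SetLike.mul_mem_graded hpj (SetLike.pow_mem_graded j hw))
  exact Nat.add_le_add_left (Nat.mul_le_mul_right q (Nat.le_sub_one_of_lt j.2)) _

variable {σ F : Type*} [Finite σ] [Field F] {f : Polynomial (MvPolynomial σ F)}
  [IsDomain (AdjoinRoot f)]

lemma mul_mul_le_of_mem_frobeniusIdeal_map_pow (hf : f.Monic)
    (hdeg : ∀ i, (f.coeff i).totalDegree ≤ f.natDegree - i) {q M b : ℕ} (hq : 1 < q)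
    {s : AdjoinRoot f} (hs : s ∈ (frobeniusIdeal σ F q).map (AdjoinRoot.of f) ^ M) (hs0 : s ≠ 0)
    (hb : s ∈ degreeFiltration f b) :
    M * f.natDegree * q ≤ f.natDegree * (b + f.natDegree) := by
  have := hf.free_adjoinRoot
  have := hf.finite_adjoinRoot
  rw [← Ideal.map_pow] at hs
  have hnorm := norm_mem_pow_card_of_mem_map (AdjoinRoot.powerBasisAux' hf) hs
  rw [Fintype.card_fin, ← pow_mul] at hnorm
  refine (mul_le_totalDegree_of_mem_frobeniusIdeal_pow hq hnorm
    (Algebra.norm_ne_zero_iff.2 hs0)).trans ?_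
  exact (mem_restrictTotalDegree _ _ _).1 <| norm_mem_of_mem_adjoinRootFiltration
    (monotone_restrictTotalDegree σ) hf (fun i => (mem_restrictTotalDegree _ _ _).2 (hdeg i)) hb

lemma le_of_evalSelfProduct_offDiagonalEquation_mem [IsAlgClosed F] (hf : f.Monic)
    (hdeg : ∀ i, (f.coeff i).totalDegree ≤ f.natDegree - i) (hpos : 0 < f.natDegree)
    (hder : Polynomial.derivative f ≠ 0) {q a k : ℕ} (hq : 1 < q)
    (hM : 2 * f.natDegree * ((monomialsBelow σ (k + f.natDegree)).card -
      (monomialsBelow σ k).card) < (monomialsBelow σ (k + f.natDegree)).card)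
    (ha : finrank F (degreeFiltration f (a + f.natDegree * (k + f.natDegree))) <
      2 * finrank F (degreeFiltration f a)) (h)
    (hg : evalSelfProduct (fun i => AdjoinRoot.of f (frobeniusDiff F q i)) (AdjoinRoot.root f ^ q) h
      (offDiagonalEquation f) ∈ (frobeniusIdeal σ F q).map (AdjoinRoot.of f)) :
    q ≤ f.natDegree * (a + f.natDegree * (k + f.natDegree) + f.natDegree + f.natDegree) := by
  obtain ⟨p, hp0, hp, z, hz⟩ := exists_approximant hf hdeg hder (Nat.le_add_right _ _) hM ha
  have hP0 : (selfProductBasis hf).equivFun.symm p ≠ 0 := (LinearEquiv.map_ne_zero_iff _).2 hp0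
  by_contra! hlt
  have := isDomain_selfProduct hf
  have hφ0 := evalSelfProduct_frobeniusDiff_ne_zero hf hdeg hq hlt
    (equivFun_symm_mem_selfProductFiltration hf fun j => (hp j).1) hP0 h
  have hφP := evalSelfProduct_mem_degreeFiltration hf h
    (frobeniusDiff_mem_degreeFiltration (by omega)) (root_pow_mem_adjoinRootFiltration f q) hp
  have hφJ : evalSelfProduct _ _ h ((selfProductBasis hf).equivFun.symm p) ∈
      (frobeniusIdeal σ F q).map (AdjoinRoot.of f) ^ (k + f.natDegree) := by
    have hdiff := evalSelfProduct_mem_pow h (J := (frobeniusIdeal σ F q).map (AdjoinRoot.of f))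
      (fun i => Ideal.mem_map_of_mem _ (Ideal.subset_span (Set.mem_range_self i))) hz
    rw [map_sub, map_mul, map_pow] at hdiff
    exact (Submodule.sub_mem_iff_right _
      (Ideal.mul_mem_left _ _ (Ideal.pow_mem_pow hg _))).1 hdiff
  have hle := mul_mul_le_of_mem_frobeniusIdeal_map_pow hf hdeg hq hφJ hφ0 hφP
  rw [mul_comm (k + _), mul_assoc] at hle
  -- With `b = e * (k + e)`, it remains to compare `(k + e) * q ≤ a + b + k * q + (e - 1) * q + e`
  -- with `a + b + 2 * e < q`.
  have hle := Nat.le_of_mul_le_mul_left hle hpos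
  have hlt := (Nat.le_mul_of_pos_left _ hpos).trans_lt hlt
  generalize f.natDegree * (k + f.natDegree) = b at hle hlt
  obtain ⟨e, he⟩ := Nat.exists_eq_add_one.2 hpos
  rw [he, Nat.add_sub_cancel] at hle
  nlinarith

end DegreeBound

section MonicEquation

lemma exists_card_monomialsBelow_sub_lt (σ : Type*) [Finite σ] {e : ℕ} (he : 0 < e) :
    ∃ k, 2 * e * ((monomialsBelow σ (k + e)).card - (monomialsBelow σ k).card) <
      (monomialsBelow σ (k + e)).card := by
  have hpos (n : ℕ) : 0 < (monomialsBelow σ (n + 1)).card :=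
    Finset.card_pos.2 ⟨0, by simp [mem_monomialsBelow]⟩
  obtain ⟨_, h⟩ := exists_le_mul_lt_mul_of_le_mul_pow (2 * e - 1) e 1 (Nat.card σ)
  obtain ⟨n, -, hn⟩ := h (fun n => (monomialsBelow σ (n + 1)).card) (hpos 0)
    fun n => by simpa using card_monomialsBelow_le n
  refine ⟨n + 1, ?_⟩
  rw [Nat.sub_add_cancel (by omega), Nat.sub_one_mul] at hn
  rw [Nat.mul_sub, add_right_comm]
  have := hpos (n + e)
  omega

lemma exists_finrank_degreeFiltration_add_lt (σ : Type*) [Finite σ] (e C : ℕ) :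
    ∃ B, ∀ {F : Type*} [Field F] {f : Polynomial (MvPolynomial σ F)}, f.Monic →
      f.natDegree = e → (∀ i, (f.coeff i).totalDegree ≤ e - i) → Nontrivial (AdjoinRoot f) →
      ∃ a ≤ B, finrank F (degreeFiltration f (a + C)) < 2 * finrank F (degreeFiltration f a) := by
  obtain ⟨B, hB⟩ := exists_le_mul_lt_mul_of_le_mul_pow 1 C e (Nat.card σ)
  refine ⟨B, fun {F} _ {f} hf he hdeg _ => ?_⟩
  subst he
  have := finiteDimensional_degreeFiltration hf hdeg 0
  have : Nontrivial (degreeFiltration f 0) :=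
    ⟨⟨1, SetLike.one_mem_graded (degreeFiltration f)⟩, 0, by simp⟩
  simpa using hB (fun a => finrank F (degreeFiltration f a)) finrank_pos
    (finrank_degreeFiltration_le hf hdeg)

variable {σ K F : Type*} [Field K] [Fintype K] [Field F] [Algebra K F]
  {f : Polynomial (MvPolynomial σ K)}

lemma evalSelfProduct_offDiagonalEquation_mem_of_forall_eval_ne_zero
    (hf : ∀ (x : σ → K) (y : K), (f.map (eval x)).eval y ≠ 0) :
    ∃ h, evalSelfProduct (f := f.map (map (algebraMap K F)))
      (fun i => AdjoinRoot.of _ (frobeniusDiff F (Fintype.card K) i))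
      (AdjoinRoot.root _ ^ Fintype.card K) h (offDiagonalEquation _) ∈
        (frobeniusIdeal σ F (Fintype.card K)).map (AdjoinRoot.of _) := by
  set g := f.map (map (algebraMap K F))
  have hroot : f.eval₂ (aeval fun i => AdjoinRoot.of g (X i) : MvPolynomial σ K →ₐ[K] AdjoinRoot g)
      (AdjoinRoot.root g) = 0 := by
    rw [← AdjoinRoot.eval₂_root g, Polynomial.eval₂_map]
    congr 1
    ext i
    · simp [IsScalarTower.algebraMap_apply K (MvPolynomial σ F) (AdjoinRoot g),
        AdjoinRoot.algebraMap_eq, MvPolynomial.algebraMap_apply]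
    · simp
  have hpow := eval₂_aeval_pow_card_eq_zero hroot
  set J := (frobeniusIdeal σ F (Fintype.card K)).map (AdjoinRoot.of g)
  have hx (i : σ) : AdjoinRoot.of g (X i) ^ Fintype.card K - AdjoinRoot.of g (X i) ∈ J := by
    rw [← map_pow, ← map_sub]
    exact Ideal.mem_map_of_mem _ (Ideal.subset_span (Set.mem_range_self i))
  have hJ : J ⊔ Ideal.span {AdjoinRoot.root g ^ Fintype.card K - AdjoinRoot.root g} = ⊤ := by
    by_contra hne
    obtain ⟨x, y, hxy⟩ := exists_eval_eval_eq_zero_of_ne_top hroot hne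
      (fun i => Ideal.mem_sup_left (hx i))
      (Ideal.mem_sup_right (Ideal.mem_span_singleton_self _))
    exact hf x y hxy
  have hg : g.eval₂ (aeval fun i => AdjoinRoot.of g (X i) ^ Fintype.card K :
      MvPolynomial σ F →ₐ[F] AdjoinRoot g) (AdjoinRoot.root g ^ Fintype.card K) = 0 := by
    rw [← hpow, Polynomial.eval₂_map]
    congr 1
    ext i
    · simp [IsScalarTower.algebraMap_apply K F (AdjoinRoot g)]
    · simp
  refine ⟨by simpa [frobeniusDiff] using hg, ?_⟩
  rw [evalSelfProduct_offDiagonalEquation]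
  exact eval_dividedDifference_mem hg hx hJ

theorem exists_eval_eval_eq_zero_of_monic (σ : Type*) [Finite σ] (e : ℕ) :
    ∃ N₀ : ℕ, ∀ {K F : Type*} [Field K] [Fintype K] [Field F] [IsAlgClosed F] [Algebra K F]
      {f : Polynomial (MvPolynomial σ K)}, N₀ ≤ Fintype.card K → f.Monic → f.natDegree = e →
      (∀ i, (f.coeff i).totalDegree ≤ e - i) →
      Irreducible (f.map (map (algebraMap K F))) → Polynomial.derivative f ≠ 0 →
      ∃ (x : σ → K) (y : K), (f.map (eval x)).eval y = 0 := by
  obtain rfl | he := e.eq_zero_or_pos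
  · refine ⟨0, fun {K F} _ _ _ _ _ {f} _ hf he _ hirr _ => ?_⟩
    rw [hf.natDegree_eq_zero.1 he, Polynomial.map_one] at hirr
    exact absurd isUnit_one hirr.not_isUnit
  obtain ⟨k, hk⟩ := exists_card_monomialsBelow_sub_lt σ he
  obtain ⟨B, hB⟩ := exists_finrank_degreeFiltration_add_lt σ e (e * (k + e))
  refine ⟨e * (B + e * (k + e) + e + e) + 1,
    fun {K F} _ _ _ _ _ {f} hcard hf hfe hdeg hirr hder => ?_⟩
  by_contra! hzero
  have hinj := map_injective (σ := σ) _ (algebraMap K F).injective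
  set g := f.map (map (algebraMap K F)) with hg
  have hge : g.natDegree = e := (hf.natDegree_map _).trans hfe
  have hgdeg (i : ℕ) : (g.coeff i).totalDegree ≤ e - i := by
    rw [hg, Polynomial.coeff_map]
    exact (Finset.sup_mono (support_map_subset _ _)).trans (hdeg i)
  have hgder : Polynomial.derivative g ≠ 0 := by
    rwa [hg, Polynomial.derivative_map, Polynomial.map_ne_zero_iff hinj]
  have := AdjoinRoot.isDomain_of_prime hirr.prime
  obtain ⟨a, haB, ha⟩ := hB (hf.map _) hge hgdeg inferInstance
  obtain ⟨h, hmem⟩ :=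
    evalSelfProduct_offDiagonalEquation_mem_of_forall_eval_ne_zero (F := F) hzero
  rw [← hge] at he hk ha hgdeg hcard
  have hle := le_of_evalSelfProduct_offDiagonalEquation_mem (hf.map _) hgdeg he hgder
    Fintype.one_lt_card hk ha h hmem
  exact absurd (hcard.trans (hle.trans (by gcongr))) (Nat.not_succ_le_self _)

end MonicEquation

section LinearSubstitution

lemma coeff_single_of_isHomogeneous {ι R : Type*} [Finite ι] [DecidableEq ι] [CommSemiring R]
    {f : MvPolynomial ι R} {d : ℕ} (hf : f.IsHomogeneous d) (j : ι) :
    coeff (Finsupp.single j d) f = eval (Pi.single j 1) f := by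
  have := Fintype.ofFinite ι
  rw [eval_eq', Finset.sum_eq_single (Finsupp.single j d)]
  · simp [Finsupp.single_apply, Pi.single_apply]
  · intro s hs hne
    obtain ⟨i, hij, hi⟩ : ∃ i ≠ j, s i ≠ 0 := by
      by_contra! h
      have hsj : s = Finsupp.single j (s j) := Finsupp.eq_single_iff.2 ⟨fun i hi => by
        by_contra hij
        exact Finsupp.mem_support_iff.1 hi (h i (by simpa using hij)), rfl⟩
      have hdeg := hf.degree_eq_sum_deg_support hs
      rw [← Finsupp.degree_apply, hsj, Finsupp.degree_single] at hdeg
      exact hne (hdeg ▸ hsj)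
    rw [Finset.prod_eq_zero (Finset.mem_univ i) (by simp [hij, hi]), mul_zero]
  · intro h
    rw [notMem_support_iff.1 h, zero_mul]

variable {ι R : Type*} [Fintype ι] [CommSemiring R]

lemma totalDegree_bind₁_toMvPolynomial_le {R : Type*} [CommRing R] (A : Matrix ι ι R)
    (f : MvPolynomial ι R) :
    (bind₁ A.toMvPolynomial f).totalDegree ≤ f.totalDegree :=
  (mem_restrictTotalDegree _ _ _).1 <| aeval_mem_of_totalDegree_le (monotone_restrictTotalDegree ι)
    (fun i => (mem_restrictTotalDegree _ _ _).2 (A.toMvPolynomial_totalDegree_le i)) le_rfl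

lemma eval_bind₁_toMvPolynomial (A : Matrix ι ι R) (f : MvPolynomial ι R) (x : ι → R) :
    eval x (bind₁ A.toMvPolynomial f) = eval (A.mulVec x) f := by
  rw [← aeval_eq_eval, aeval_bind₁, ← aeval_eq_eval]
  simp [A.toMvPolynomial_eval_eq_apply]

lemma coeff_single_bind₁_toMvPolynomial (A : Matrix ι ι R) (f : MvPolynomial ι R) (j : ι) (d : ℕ) :
    coeff (Finsupp.single j d) (bind₁ A.toMvPolynomial f) =
      eval (A.col j) (homogeneousComponent d f) := by
  classical
  have hhom (k : ℕ) : (bind₁ A.toMvPolynomial (homogeneousComponent k f)).IsHomogeneous k := by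
    simpa using (homogeneousComponent_isHomogeneous k f).aeval _ A.toMvPolynomial_isHomogeneous
  conv_lhs => rw [← sum_homogeneousComponent f, map_sum, coeff_sum]
  have hzero (k : ℕ) (hk : k ≠ d) :
      coeff (Finsupp.single j d) (bind₁ A.toMvPolynomial (homogeneousComponent k f)) = 0 :=
    (hhom k).coeff_eq_zero (by simpa using hk.symm)
  rw [Finset.sum_eq_single d (fun k _ => hzero k), coeff_single_of_isHomogeneous (hhom d),
    eval_bind₁_toMvPolynomial, Matrix.mulVec_single_one]
  intro hd
  rw [homogeneousComponent_eq_zero _ _ (by simpa using hd), map_zero, coeff_zero]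

lemma pderiv_bind₁_toMvPolynomial (A : Matrix ι ι R) (f : MvPolynomial ι R) (j : ι) :
    pderiv j (bind₁ A.toMvPolynomial f) =
      bind₁ A.toMvPolynomial (∑ i, C (A i j) * pderiv i f) := by
  classical
  induction f using MvPolynomial.induction_on with
  | C a => simp
  | add f g hf hg => simp only [map_add, hf, hg, mul_add, Finset.sum_add_distrib]
  | mul_X f k hf =>
    have hA : pderiv j (A.toMvPolynomial k) = C (A k j) := by
      simp [Matrix.toMvPolynomial, ← C_mul_X_eq_monomial, pderiv_X, Pi.single_apply]
    have hk : ∑ i, C (A i j) * pderiv i (f * X k) =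
        (∑ i, C (A i j) * pderiv i f) * X k + f * C (A k j) := by
      simp [pderiv_X, Pi.single_apply, mul_add, Finset.sum_add_distrib, Finset.mul_sum, mul_comm,
        mul_left_comm, add_comm]
    rw [map_mul, pderiv_mul, hf, hk, bind₁_X_right, hA]
    simp

/-- The automorphism `f ↦ f (A x)` of the polynomial ring given by an invertible matrix `A`. -/
noncomputable def linearSubstEquiv {R : Type*} [CommRing R] [DecidableEq ι] (A : Matrix ι ι R)
    (hA : IsUnit A.det) : MvPolynomial ι R ≃ₐ[R] MvPolynomial ι R :=
  have hcomp {M N : Matrix ι ι R} (h : M * N = 1) :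
      (bind₁ N.toMvPolynomial).comp (bind₁ M.toMvPolynomial) = AlgHom.id R _ := by
    ext1 i
    simp [← Matrix.toMvPolynomial_mul, h, Matrix.toMvPolynomial_one]
  AlgEquiv.ofAlgHom (bind₁ A.toMvPolynomial) (bind₁ A⁻¹.toMvPolynomial)
    (hcomp (A.nonsing_inv_mul hA)) (hcomp (A.mul_nonsing_inv hA))

lemma linearSubstEquiv_apply {R : Type*} [CommRing R] [DecidableEq ι] (A : Matrix ι ι R)
    (hA : IsUnit A.det) (f : MvPolynomial ι R) :
    linearSubstEquiv A hA f = bind₁ A.toMvPolynomial f :=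
  rfl

end LinearSubstitution

section Perfect

lemma exists_expand_eq_of_forall_pderiv_eq_zero {σ R : Type*} [CommRing R] [IsDomain R]
    (p : ℕ) [CharP R p] {f : MvPolynomial σ R} (h : ∀ i, pderiv i f = 0) : ∃ g, expand p g = f := by
  have hdvd {s : σ →₀ ℕ} (hs : s ∈ f.support) (i : σ) : p ∣ s i := by
    have hcoeff := congrArg (coeff (s - Finsupp.single i 1)) (h i)
    by_cases hi : s i = 0
    · simp [hi]
    have hle : Finsupp.single i 1 ≤ s := by simpa [Nat.one_le_iff_ne_zero] using hi
    rw [coeff_pderiv, tsub_add_cancel_of_le hle, coeff_zero,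
      mul_eq_zero_iff_left (mem_support_iff.1 hs), ← Nat.cast_add_one, CharP.cast_eq_zero_iff R p,
      Finsupp.tsub_apply, Finsupp.single_eq_same,
      Nat.sub_add_cancel (Nat.one_le_iff_ne_zero.2 hi)] at hcoeff
    exact hcoeff
  refine ⟨∑ s ∈ f.support, monomial (s.mapRange (· / p) (Nat.zero_div p)) (coeff s f), ?_⟩
  conv_rhs => rw [f.as_sum]
  rw [map_sum]
  refine Finset.sum_congr rfl fun s hs => ?_
  rw [expand_monomial]
  congr 2
  ext i
  simp [Nat.mul_div_cancel' (hdvd hs i)]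

lemma exists_pderiv_ne_zero_of_irreducible {σ k : Type*} [Field k] (p : ℕ) [Fact p.Prime]
    [CharP k p] [PerfectRing k p] {f : MvPolynomial σ k} (hf : Irreducible f) :
    ∃ i, pderiv i f ≠ 0 := by
  by_contra! h
  obtain ⟨g, rfl⟩ := exists_expand_eq_of_forall_pderiv_eq_zero p h
  obtain ⟨g, rfl⟩ := map_surjective (frobenius k p) (bijective_frobenius k p).2 g
  rw [← map_expand, map_frobenius_expand] at hf
  exact not_irreducible_pow (Fact.out : p.Prime).ne_one hf

end Perfect

section FinSucc

variable {m : ℕ} {R S : Type*} [CommSemiring R] [CommSemiring S]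

lemma finSuccEquiv_map (φ : R →+* S) (f : MvPolynomial (Fin (m + 1)) R) :
    finSuccEquiv S m (map φ f) = (finSuccEquiv R m f).map (map φ) := by
  ext i s
  simp [finSuccEquiv_coeff_coeff, coeff_map]

lemma derivative_finSuccEquiv (f : MvPolynomial (Fin (m + 1)) R) :
    Polynomial.derivative (finSuccEquiv R m f) = finSuccEquiv R m (pderiv 0 f) := by
  ext i s
  rw [Polynomial.coeff_derivative, ← Nat.cast_add_one, ← C_eq_coe_nat, mul_comm, coeff_C_mul,
    finSuccEquiv_coeff_coeff, finSuccEquiv_coeff_coeff, coeff_pderiv, mul_comm]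
  congr 2
  · ext k
    refine Fin.cases ?_ (fun k => ?_) k <;> simp
  · simp

end FinSucc

lemma exists_eval_ne_zero_of_totalDegree_lt_card {n : ℕ} {R : Type*} [CommRing R] [IsDomain R]
    [Fintype R] {f : MvPolynomial (Fin n) R} (hf : f ≠ 0) (h : f.totalDegree < Fintype.card R) :
    ∃ v, eval v f ≠ 0 := by
  classical
  by_contra! hv
  have := schwartz_zippel_totalDegree hf Finset.univ
  have hpos : (0 : ℚ≥0) < Fintype.card R := by exact_mod_cast Fintype.card_pos
  simp only [hv, Finset.filter_true, Fintype.card_piFinset, Finset.prod_const, Finset.card_univ,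
    Fintype.card_fin, Nat.cast_pow] at this
  rw [div_self (by positivity), one_le_div hpos] at this
  exact h.not_ge (by exact_mod_cast this)

section MonicPosition

lemma homogeneousComponent_totalDegree_ne_zero {σ R : Type*} [CommSemiring R]
    {f : MvPolynomial σ R} (hf : f ≠ 0) : homogeneousComponent f.totalDegree f ≠ 0 := by
  obtain ⟨s, hs, hdeg : f.totalDegree = s.degree⟩ :=
    Finset.exists_mem_eq_sup _ (support_nonempty.2 hf) Finsupp.degree
  refine ne_zero_iff.2 ⟨s, ?_⟩
  rw [coeff_homogeneousComponent, if_pos hdeg.symm]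
  exact mem_support_iff.1 hs

lemma exists_eval_homogeneousComponent_ne_zero {m : ℕ} {K : Type*} [Field K] [Fintype K]
    {f : MvPolynomial (Fin (m + 1)) K} (hf : ∃ i, pderiv i f ≠ 0)
    (hcard : f.totalDegree + 2 < Fintype.card K) :
    ∃ v : Fin (m + 1) → K, v 0 ≠ 0 ∧ eval v (homogeneousComponent f.totalDegree f) ≠ 0 ∧
      ∑ i, C (v i) * pderiv i f ≠ 0 := by
  obtain ⟨i, hi⟩ := hf
  obtain ⟨s, hs⟩ := ne_zero_iff.1 hi
  have hf0 : f ≠ 0 := by rintro rfl; simp at hi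
  set L : MvPolynomial (Fin (m + 1)) K := ∑ j, C (coeff s (pderiv j f)) * X j with hL
  have hLhom : L.IsHomogeneous 1 :=
    IsHomogeneous.sum _ _ _ fun j _ => isHomogeneous_C_mul_X _ j
  have hL0 : L ≠ 0 := by
    refine ne_zero_iff.2 ⟨Finsupp.single i 1, ?_⟩
    simpa [hL, coeff_sum, coeff_C_mul, coeff_X, Finsupp.single_left_inj] using hs
  have hhom := ((homogeneousComponent_isHomogeneous f.totalDegree f).mul
    (isHomogeneous_X K (0 : Fin (m + 1)))).mul hLhom
  obtain ⟨v, hv⟩ := exists_eval_ne_zero_of_totalDegree_lt_card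
    (mul_ne_zero (mul_ne_zero (homogeneousComponent_totalDegree_ne_zero hf0) (X_ne_zero 0)) hL0)
    (hhom.totalDegree_le.trans_lt hcard)
  simp only [map_mul, eval_X, mul_ne_zero_iff] at hv
  refine ⟨v, hv.1.2, hv.1.1, ne_zero_iff.2 ⟨s, ?_⟩⟩
  convert hv.2 using 1
  simp [hL, coeff_sum, coeff_C_mul, mul_comm]

lemma exists_eval_eq_zero_of_coeff_single_eq_one (m d : ℕ) :
    ∃ N₀ : ℕ, ∀ {K F : Type*} [Field K] [Fintype K] [Field F] [IsAlgClosed F] [Algebra K F]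
      {f : MvPolynomial (Fin (m + 1)) K}, N₀ ≤ Fintype.card K → f.totalDegree ≤ d →
      coeff (Finsupp.single 0 d) f = 1 → Irreducible (map (algebraMap K F) f) →
      pderiv 0 f ≠ 0 → ∃ x, eval x f = 0 := by
  obtain ⟨N₀, hN₀⟩ := exists_eval_eval_eq_zero_of_monic (Fin m) d
  refine ⟨N₀, fun {K F} _ _ _ _ _ {f} hcard hd hlead hirr hder => ?_⟩
  set g := finSuccEquiv K m f with hg
  have hgdeg (i : ℕ) : (g.coeff i).totalDegree ≤ d - i := by
    by_cases hi : g.coeff i = 0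
    · simp [hi]
    · exact Nat.le_sub_of_add_le ((totalDegree_coeff_finSuccEquiv_add_le f i hi).trans hd)
  have hgd : g.coeff d = 1 := by
    have hconst := totalDegree_eq_zero_iff_eq_C.1
      (Nat.le_zero.1 ((hgdeg d).trans (Nat.sub_self d).le))
    rw [hconst, hg, finSuccEquiv_coeff_coeff, Finsupp.cons_zero_eq_single_zero, hlead, C_1]
  have hgnat : g.natDegree ≤ d :=
    (natDegree_finSuccEquiv f).trans_le ((degreeOf_le_totalDegree f 0).trans hd)
  have hgirr : Irreducible (g.map (map (algebraMap K F))) := by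
    rw [← finSuccEquiv_map]
    exact (MulEquiv.irreducible_iff (finSuccEquiv F m)).2 hirr
  have hgder : Polynomial.derivative g ≠ 0 := by
    rwa [derivative_finSuccEquiv, map_ne_zero_iff _ (finSuccEquiv K m).injective]
  obtain ⟨x, y, hxy⟩ := hN₀ hcard (Polynomial.monic_of_natDegree_le_of_coeff_eq_one d hgnat hgd)
    (Polynomial.natDegree_eq_of_le_of_coeff_ne_zero hgnat (hgd ▸ one_ne_zero)) hgdeg hgirr hgder
  exact ⟨Fin.cons y x, (eval_eq_eval_mv_eval' x y f).trans hxy⟩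

lemma exists_eval_eq_zero_of_coeff_single_ne_zero (m d : ℕ) :
    ∃ N₀ : ℕ, ∀ {K F : Type*} [Field K] [Fintype K] [Field F] [IsAlgClosed F] [Algebra K F]
      {f : MvPolynomial (Fin (m + 1)) K}, N₀ ≤ Fintype.card K → f.totalDegree ≤ d →
      coeff (Finsupp.single 0 d) f ≠ 0 → Irreducible (map (algebraMap K F) f) →
      pderiv 0 f ≠ 0 → ∃ x, eval x f = 0 := by
  obtain ⟨N₀, hN₀⟩ := exists_eval_eq_zero_of_coeff_single_eq_one m d
  refine ⟨N₀, fun {K F} _ _ _ _ _ {f} hcard hd hlead hirr hder => ?_⟩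
  set c := (coeff (Finsupp.single 0 d) f)⁻¹ with hc
  have hc0 : c ≠ 0 := inv_ne_zero hlead
  have hunit : IsUnit (C (algebraMap K F c) : MvPolynomial (Fin (m + 1)) F) := by simpa using hc0
  obtain ⟨x, hx⟩ := hN₀ (F := F) (f := C c * f) hcard
    ((totalDegree_mul _ _).trans (by simpa using hd)) (by simp [hc, hlead])
    (by simpa [map_mul, irreducible_isUnit_mul hunit] using hirr) (by simpa [hc0] using hder)
  exact ⟨x, by simpa [hc0] using hx⟩

theorem exists_eval_eq_zero_of_totalDegree_eq (m d : ℕ) :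
    ∃ N₀ : ℕ, ∀ {K F : Type*} [Field K] [Fintype K] [Field F] [IsAlgClosed F] [Algebra K F]
      {f : MvPolynomial (Fin (m + 1)) K}, N₀ ≤ Fintype.card K → f.totalDegree = d →
      Irreducible (map (algebraMap K F) f) → ∃ x, eval x f = 0 := by
  obtain ⟨N₀, hN₀⟩ := exists_eval_eq_zero_of_coeff_single_ne_zero m d
  refine ⟨N₀ + d + 3, fun {K F} _ _ _ _ _ {f} hcard hd hirr => ?_⟩
  obtain ⟨p, hp⟩ := CharP.exists K
  have := Fact.mk (CharP.char_is_prime K p)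
  have := charP_of_injective_algebraMap (algebraMap K F).injective p
  obtain ⟨i, hi⟩ := exists_pderiv_ne_zero_of_irreducible p hirr
  rw [pderiv_map] at hi
  obtain ⟨v, hv, hlead, hder⟩ := exists_eval_homogeneousComponent_ne_zero (f := f)
    ⟨i, fun h => hi (by rw [h, map_zero])⟩ (by omega)
  set A : Matrix (Fin (m + 1)) (Fin (m + 1)) K := Matrix.updateCol 1 0 v with hA
  have hAcol : A.col 0 = v := by ext; simp [hA]
  have hdet : IsUnit A.det := by
    rw [hA, ← Matrix.cramer_apply, Matrix.cramer_one]
    exact hv.isUnit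
  have hdetF : IsUnit (A.map (algebraMap K F)).det := by
    rw [← RingHom.mapMatrix_apply, ← RingHom.map_det]
    exact hdet.map _
  have hirrA : Irreducible (map (algebraMap K F) (bind₁ A.toMvPolynomial f)) := by
    simp_rw [map_bind₁, ← Matrix.toMvPolynomial_map]
    exact (MulEquiv.irreducible_iff (linearSubstEquiv _ hdetF)).2 hirr
  have hderA : pderiv 0 (bind₁ A.toMvPolynomial f) ≠ 0 := by
    rw [pderiv_bind₁_toMvPolynomial, ← linearSubstEquiv_apply A hdet,
      map_ne_zero_iff _ (linearSubstEquiv A hdet).injective]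
    simpa only [← hAcol, Matrix.col_apply] using hder
  obtain ⟨x, hx⟩ := hN₀ (by omega) ((totalDegree_bind₁_toMvPolynomial_le A f).trans_eq hd)
    (by rwa [coeff_single_bind₁_toMvPolynomial, hAcol, ← hd]) hirrA hderA
  exact ⟨A.mulVec x, by rwa [← eval_bind₁_toMvPolynomial]⟩

end MonicPosition

end Stepanov

theorem absolutely_irreducible_hypersurface_has_point_general (n d : ℕ) :
    ∃ N₀ : ℕ, ∀ {K F : Type*} [Field K] [Finite K] [Field F] [IsAlgClosed F] [Algebra K F]
      {f : MvPolynomial (Fin n) K}, N₀ ≤ Nat.card K → f.totalDegree ≤ d →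
      Irreducible (map (algebraMap K F) f) → ∃ x, eval x f = 0 := by
  obtain _ | m := n
  · refine ⟨0, fun {K F} _ _ _ _ _ {f} _ _ hirr => ?_⟩
    rw [eq_C_of_isEmpty f, map_C] at hirr
    have hc : algebraMap K F (coeff 0 f) ≠ 0 := fun h => hirr.ne_zero (by rw [h, C_0])
    exact absurd (hc.isUnit.map C) hirr.not_isUnit
  · choose N hN using Stepanov.exists_eval_eq_zero_of_totalDegree_eq m
    refine ⟨∑ e ∈ Finset.range (d + 1), N e, fun {K F} _ _ _ _ _ {f} hcard hd hirr => ?_⟩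
    have := Fintype.ofFinite K
    rw [Nat.card_eq_fintype_card] at hcard
    refine hN _ (le_trans ?_ hcard) rfl hirr
    exact Finset.single_le_sum (fun _ _ => Nat.zero_le _) (Finset.mem_range_succ_iff.2 hd)

/-- Absolutely irreducible hypersurfaces over large finite fields have rational points:
for `n ≥ 2`, `d ≥ 1` there is `N₀` depending only on `n` and `d` such that for any finite
field `K` with `q = p^k ≥ N₀` elements and any `f ∈ K[x₁,…,xₙ]` of total degree between `1`
and `d` that remains irreducible over the algebraic closure of `K`, `f` has a zero in `K^n`. -/
theorem absolutely_irreducible_hypersurface_has_point (n d : ℕ) (hn : 2 ≤ n) (hd : 1 ≤ d) :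
    ∃ N₀ : ℕ, ∀ (p : ℕ) [Fact p.Prime], ∀ k : ℕ, 1 ≤ k → N₀ ≤ p ^ k →
      ∀ f : MvPolynomial (Fin n) (GaloisField p k),
        1 ≤ f.totalDegree → f.totalDegree ≤ d →
        Irreducible (MvPolynomial.map
          (algebraMap (GaloisField p k) (AlgebraicClosure (GaloisField p k))) f) →
        ∃ x : Fin n → GaloisField p k, MvPolynomial.eval x f = 0 := by
  obtain ⟨N₀, hN₀⟩ := absolutely_irreducible_hypersurface_has_point_general n d
  refine ⟨N₀, fun p _ k hk hcard f _ hfd hirr => hN₀ ?_ hfd hirr⟩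
  rwa [GaloisField.card p k (by omega)]
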